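/- arXiv:2206.08095 — 3 statements merged into one kernel-verified Lean document; each statement's English description precedes it below -/
import Mathlib

section
/- The function b(α) = lim_{n→∞} b_n(α) is convex and continuous on the interval [2,∞). -/
/-!
The function `b` is convex because rooted graphs can be glued at their roots (`exists_glue`). The
numbers of non-root vertices and of edges then add up, and the total resistance to the root does not
exceed the sum, because a flow in either part is a flow in the whole. Hence
`(n + m) b_{n+m}(γ) ≤ n b_n(x) + m b_m(y)` whenever `x n + y m ≤ γ (n + m)`, and convexity follows by
letting `n + m → ∞` with `n / (n + m) → t` (`convex_aux`).

The star shows `b ≤ 1`, so `b` is real-valued, and a convex function is continuous in the interior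
of its domain. At the end point `2` a separate lower bound is needed: `b_n(α) ≥ 9 - 4α`
(`nine_le_bFun`), which together with `b ≤ 1` squeezes `b` near `2`.

This bound is a consequence of the fact that in a connected graph with `n` non-root vertices, all
but `8 (|E| - n)` of them have resistance at least `1` to the root (`card_bad_le`). Lower bounds for
the resistance come from test functions with unit potential difference and Dirichlet energy at most
`1`. Leaves have resistance at least `1`, and pruning them changes neither `|E| - n` nor the
energies of test functions. When no non-root leaves remain, a vertex of degree two whose neighbours
are non-root vertices of degree two is good: use the function equal to `1` there and to `1/2` at the
neighbours. All remaining vertices have degree at least three or are adjacent to the root or to such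
a vertex, and their number is controlled by
`deg ρ + ∑_{v ≠ ρ} (deg v - 2) = 2 (|E| - n)`.
-/


open scoped ENNReal

set_option linter.unusedSectionVars false

attribute [local instance 10] Classical.propDecidable

/-- A multigraph (parallel edges allowed): a finite edge type with two endpoint maps. -/
structure Multigraph (V : Type) where
  E : Type
  [fE : Fintype E]
  fst : E → V
  snd : E → V

attribute [instance] Multigraph.fE

namespace Multigraph

variable {V : Type} [Fintype V] [DecidableEq V]

/-- The number of edges of a multigraph. -/
noncomputable def edgeCount (G : Multigraph V) : ℕ := Fintype.card G.E

/-- The net current flowing out of `v` under the current assignment `f`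
(the current `f e` flows from `G.fst e` to `G.snd e`). -/
noncomputable def netFlow (G : Multigraph V) (f : G.E → ℝ) (v : V) : ℝ :=
  ∑ e : G.E, ((if G.fst e = v then f e else 0) - (if G.snd e = v then f e else 0))

/-- A unit flow from `x` to `y`: Kirchhoff's current law holds at every vertex other
than `x` and `y`, and the net current out of `x` is `1`. -/
def IsUnitFlow (G : Multigraph V) (x y : V) (f : G.E → ℝ) : Prop :=
  G.netFlow f x = 1 ∧ ∀ v : V, v ≠ x → v ≠ y → G.netFlow f v = 0

/-- The effective resistance between `x` and `y`: the least energy `∑ e, (I e)^2` of a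
unit flow from `x` to `y` (`∞` if there is no such flow, `0` if `x = y`). -/
noncomputable def effRes (G : Multigraph V) (x y : V) : ℝ≥0∞ :=
  if x = y then 0
  else ⨅ f : {f : G.E → ℝ // G.IsUnitFlow x y f}, ENNReal.ofReal (∑ e : G.E, (f.1 e) ^ 2)

/-- Adjacency in a multigraph. -/
def Adj (G : Multigraph V) (u v : V) : Prop :=
  ∃ e : G.E, (G.fst e = u ∧ G.snd e = v) ∨ (G.fst e = v ∧ G.snd e = u)

/-- A multigraph is connected if every vertex is reachable from every other. -/
def Connected (G : Multigraph V) : Prop :=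
  ∀ u v : V, Relation.ReflTransGen G.Adj u v

/-- The degree of a vertex (loops count twice). -/
noncomputable def degree (G : Multigraph V) (v : V) : ℕ :=
  (Finset.univ.filter fun e : G.E => G.fst e = v).card +
    (Finset.univ.filter fun e : G.E => G.snd e = v).card

/-- The number of leaves (vertices of degree 1). -/
noncomputable def leafCount (G : Multigraph V) : ℕ :=
  (Finset.univ.filter fun v : V => G.degree v = 1).card

/-- `A(G)`: the average effective resistance over unordered pairs of distinct vertices. -/
noncomputable def avgPairRes (G : Multigraph V) : ℝ≥0∞ :=
  (∑ x : V, ∑ y : V, G.effRes x y) / (2 * ((Fintype.card V).choose 2 : ℝ≥0∞))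

/-- `A'(G)`: the average effective resistance over ordered pairs of vertices. -/
noncomputable def avgOrdRes (G : Multigraph V) : ℝ≥0∞ :=
  (∑ x : V, ∑ y : V, G.effRes x y) / ((Fintype.card V : ℝ≥0∞) ^ 2)

/-- The total effective resistance to the root `ρ`. -/
noncomputable def Rtot (G : Multigraph V) (ρ : V) : ℝ≥0∞ := ∑ x : V, G.effRes ρ x

/-- `B(G)`: the average resistance of a non-root vertex to the root `ρ`. -/
noncomputable def rootedAvg (G : Multigraph V) (ρ : V) : ℝ≥0∞ :=
  G.Rtot ρ / ((Fintype.card V - 1 : ℕ) : ℝ≥0∞)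

/-- A tree: a connected multigraph with one more vertex than edge. -/
def IsTree (G : Multigraph V) : Prop := G.Connected ∧ G.edgeCount + 1 = Fintype.card V

/-- `v` is within distance `ℓ` of `x` (there is a lazy walk of length `ℓ` from `x` to `v`). -/
def WithinDist (G : Multigraph V) (ℓ : ℕ) (x v : V) : Prop :=
  ∃ p : ℕ → V, p 0 = x ∧ p ℓ = v ∧ ∀ i, i < ℓ → p i = p (i + 1) ∨ G.Adj (p i) (p (i + 1))

end Multigraph

open Multigraph

/-- `b_n(α)`: the least value of `B(G)` over rooted graphs with `n` non-root vertices
and at most `αn/2` edges (the root may be any vertex). -/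
noncomputable def bFun (n : ℕ) (α : ℝ) : ℝ≥0∞ :=
  ⨅ G : {p : Multigraph (Fin (n + 1)) × Fin (n + 1) // (p.1.edgeCount : ℝ) ≤ α * n / 2},
    rootedAvg G.1.1 G.1.2

/-- `a_n(α)`: the least value of `A'(G)` over graphs with `n` vertices and at most
`αn/2` edges. -/
noncomputable def aFun (n : ℕ) (α : ℝ) : ℝ≥0∞ :=
  ⨅ G : {G : Multigraph (Fin n) // (G.edgeCount : ℝ) ≤ α * n / 2}, avgOrdRes G.1

/-- `G_S`: add a new root vertex `Fin.last n` joined by one edge to each entry of the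
`s`-tuple (multiset) `S`. -/
noncomputable def addRoot {n : ℕ} (G : Multigraph (Fin n)) {s : ℕ} (S : Fin s → Fin n) :
    Multigraph (Fin (n + 1)) where
  E := G.E ⊕ Fin s
  fst := Sum.elim (fun e => (G.fst e).castSucc) fun _ => Fin.last n
  snd := Sum.elim (fun e => (G.snd e).castSucc) fun i => (S i).castSucc

section Trees

variable {V : Type} [Fintype V] [DecidableEq V]

/-- The map identifying all leaves of `T` to the single new vertex `Sum.inr ()`. -/
noncomputable def leafId (T : Multigraph V) (v : V) : V ⊕ Unit :=
  if T.degree v = 1 then Sum.inr () else Sum.inl v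

/-- The multigraph obtained from `T` by identifying all its leaves to one vertex. -/
noncomputable def identifyLeaves (T : Multigraph V) : Multigraph (V ⊕ Unit) where
  E := T.E
  fst := fun e => leafId T (T.fst e)
  snd := fun e => leafId T (T.snd e)

/-- `R(x,T)`: the effective resistance between `x` and the vertex obtained by
identifying all the leaves of `T`. -/
noncomputable def treeRes (T : Multigraph V) (x : V) : ℝ≥0∞ :=
  (identifyLeaves T).effRes (leafId T x) (Sum.inr ())

/-- The rooted graph formed from `T` and a set `S` of sinks: add a root `Sum.inr ()`
joined to each `v ∈ S` by `degree v - 1` parallel edges. -/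
noncomputable def randRooted (T : Multigraph V) (S : Finset V) : Multigraph (V ⊕ Unit) where
  E := T.E ⊕ (Σ v : {v : V // v ∈ S}, Fin (T.degree v.1 - 1))
  fst := Sum.elim (fun e => Sum.inl (T.fst e)) fun p => Sum.inl p.1.1
  snd := Sum.elim (fun e => Sum.inl (T.snd e)) fun _ => Sum.inr ()

/-- The subgraph induced on the vertices satisfying `P`. -/
noncomputable def inducedSub (G : Multigraph V) (P : V → Prop) : Multigraph {v : V // P v} where
  E := {e : G.E // P (G.fst e) ∧ P (G.snd e)}
  fst := fun e => ⟨G.fst e.1, e.2.1⟩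
  snd := fun e => ⟨G.snd e.1, e.2.2⟩

lemma withinDist_self (G : Multigraph V) (ℓ : ℕ) (x : V) : G.WithinDist ℓ x x :=
  ⟨fun _ => x, rfl, rfl, fun _ _ => Or.inl rfl⟩

/-- `R(x, T_x)` where `T_x` is the subgraph of `G` induced by the vertices within
distance `ℓ` of `x`. -/
noncomputable def localRes (G : Multigraph V) (ℓ : ℕ) (x : V) : ℝ≥0∞ :=
  treeRes (inducedSub G (G.WithinDist ℓ x)) ⟨x, withinDist_self G ℓ x⟩

/-- cyclic successor on `Fin k` -/
def cycSucc {k : ℕ} (i : Fin k) : Fin k :=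
  ⟨(i.1 + 1) % k, Nat.mod_lt _ (Nat.lt_of_le_of_lt (Nat.zero_le i.1) i.isLt)⟩

/-- `G` contains a cycle with `k` (distinct) vertices and `k` distinct edges. -/
def HasCycleLength (G : Multigraph V) (k : ℕ) : Prop :=
  0 < k ∧ ∃ (v : Fin k → V) (e : Fin k → G.E), Function.Injective v ∧ Function.Injective e ∧
    ∀ i : Fin k, (G.fst (e i) = v i ∧ G.snd (e i) = v (cycSucc i)) ∨
      (G.fst (e i) = v (cycSucc i) ∧ G.snd (e i) = v i)

/-- `G⁺/x`: delete the two edges `e₁, e₂` at the degree-2 vertex `x`, add an edge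
`y₁y₂` (contracting `y₁x`), and reuse `x` as a new leaf attached to the root `ρ`. -/
noncomputable def contractPlus (G : Multigraph V) (x ρ : V) (e₁ e₂ : G.E) (y₁ y₂ : V) :
    Multigraph V where
  E := {e : G.E // e ≠ e₁ ∧ e ≠ e₂} ⊕ Fin 2
  fst := Sum.elim (fun e => G.fst e.1) fun i => if i = 0 then y₁ else x
  snd := Sum.elim (fun e => G.snd e.1) fun i => if i = 0 then y₂ else ρ

end Trees

/-- A Queen-Bee network: every non-root vertex is joined to the root. -/
def QueenBee {n : ℕ} (G : Multigraph (Fin (n + 1))) (ρ : Fin (n + 1)) : Prop :=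
  ∀ v : Fin (n + 1), v ≠ ρ → G.Adj ρ v

section Weighted

variable {V : Type} [Fintype V] [DecidableEq V]

/-- A unit flow from `x` to `y` in a weighted network with conductances `c`:
antisymmetric, zero on edges of zero conductance, and satisfying Kirchhoff's
current law away from `x` and `y`, with net current `1` out of `x`. -/
def IsWUnitFlow (c : V → V → ℝ) (x y : V) (f : V → V → ℝ) : Prop :=
  (∀ u v, f u v = - f v u) ∧ (∀ u v, c u v = 0 → f u v = 0) ∧
    (∑ v : V, f x v) = 1 ∧ ∀ u : V, u ≠ x → u ≠ y → (∑ v : V, f u v) = 0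

/-- The effective resistance between `x` and `y` in the weighted network with
conductances `c`: the least energy `∑_{uv} I_{uv}²/c_{uv}` of a unit flow. -/
noncomputable def weffRes (c : V → V → ℝ) (x y : V) : ℝ≥0∞ :=
  if x = y then 0
  else ⨅ f : {f : V → V → ℝ // IsWUnitFlow c x y f},
    ENNReal.ofReal ((1 / 2) * ∑ u : V, ∑ v : V, (f.1 u v) ^ 2 / c u v)

end Weighted

namespace RootedResistance

variable {V : Type} [Fintype V] [DecidableEq V]

/-! ### Test functions bound effective resistances from below -/

lemma sum_mul_netFlow (G : Multigraph V) (f : G.E → ℝ) (g : V → ℝ) :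
    ∑ v, g v * G.netFlow f v = ∑ e, f e * (g (G.fst e) - g (G.snd e)) := by
  simp only [Multigraph.netFlow, Finset.mul_sum]
  rw [Finset.sum_comm]
  refine Finset.sum_congr rfl fun e _ => ?_
  simp only [mul_sub, mul_ite, mul_zero, Finset.sum_sub_distrib, Finset.sum_ite_eq,
    Finset.mem_univ, if_true]
  ring

/-- A unit flow from `ρ` to `x` paired with the gradient of `g` gives `g ρ - g x`. The definition
of a unit flow leaves the net current at `x` free; conservation over all of `V` forces it to be
`-1`, and this is used here by subtracting the constant `g x`. -/
lemma flow_pairing (G : Multigraph V) {ρ x : V} {f : G.E → ℝ}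
    (hf : G.IsUnitFlow ρ x f) (g : V → ℝ) :
    ∑ e, f e * (g (G.fst e) - g (G.snd e)) = g ρ - g x := by
  have h := sum_mul_netFlow G f (fun v => g v - g x)
  simp only [sub_sub_sub_cancel_right] at h
  rw [← h, Finset.sum_eq_single ρ, hf.1, mul_one]
  · intro v _ hv
    by_cases hvx : v = x
    · simp [hvx]
    · rw [hf.2 v hv hvx, mul_zero]
  · simp

/-- The test-function inequality: a potential difference of `1` at Dirichlet energy at most `1`
certifies an effective resistance of at least `1`. -/
lemma one_le_effRes (G : Multigraph V) {ρ x : V} (g : V → ℝ) (h0 : g ρ = 0) (h1 : g x = 1)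
    (hE : ∑ e, (g (G.fst e) - g (G.snd e)) ^ 2 ≤ 1) : 1 ≤ G.effRes ρ x := by
  have hne : ρ ≠ x := by
    rintro rfl
    linarith
  rw [Multigraph.effRes, if_neg hne]
  refine le_iInf fun ⟨f, hf⟩ => ?_
  rw [ENNReal.one_le_ofReal]
  have h2 := flow_pairing G hf g
  have h3 := Finset.sum_mul_sq_le_sq_mul_sq Finset.univ f
    (fun e => g (G.fst e) - g (G.snd e))
  rw [h2, h0, h1] at h3
  have h4 : 0 ≤ ∑ e, f e ^ 2 := Finset.sum_nonneg fun _ _ => sq_nonneg _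
  nlinarith

/-- If the resistance from the root to a vertex of `U` is finite and `ρ ∉ U`, some edge has exactly
one end in `U`. -/
lemma exists_cut_edge (G : Multigraph V) {ρ x : V} (hx : G.effRes ρ x ≠ ⊤) (U : Finset V)
    (hxU : x ∈ U) (hρ : ρ ∉ U) : ∃ e, ¬ (G.fst e ∈ U ↔ G.snd e ∈ U) := by
  by_contra! hcon
  apply hx
  have hne : ρ ≠ x := by
    rintro rfl
    exact hρ hxU
  rw [Multigraph.effRes, if_neg hne, iInf_eq_top]
  rintro ⟨f, hf⟩
  have h2 := flow_pairing G hf (fun v => if v ∈ U then 1 else 0)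
  rw [Finset.sum_eq_zero] at h2
  · simp [hxU, hρ] at h2
  · intro e _
    simp [hcon e]

/-! ### A sparse graph has few vertices of resistance below one -/

/-- Edges of `F` incident to `v`. -/
noncomputable def inc (G : Multigraph V) (F : Finset G.E) (v : V) : Finset G.E :=
  F.filter fun e => G.fst e = v ∨ G.snd e = v

/-- Degree of `v` in the edge set `F`; loops count twice. -/
noncomputable def deg (G : Multigraph V) (F : Finset G.E) (v : V) : ℕ :=
  (F.filter fun e => G.fst e = v).card + (F.filter fun e => G.snd e = v).card

/-- Neighbours of `v` through edges of `F`; `v` itself belongs if it carries a loop. -/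
noncomputable def nbr (G : Multigraph V) (F : Finset G.E) (v : V) : Finset V :=
  (F.filter fun e => G.fst e = v).image G.snd ∪ (F.filter fun e => G.snd e = v).image G.fst

/-- The vertex `x` is good (otherwise bad) if a test function certifies that `x` has resistance at least `1` to `ρ` in the graph with
edge set `F`. -/
def Good (G : Multigraph V) (ρ : V) (F : Finset G.E) (x : V) : Prop :=
  ∃ g : V → ℝ, g ρ = 0 ∧ g x = 1 ∧ ∑ e ∈ F, (g (G.fst e) - g (G.snd e)) ^ 2 ≤ 1

lemma card_inc_le (G : Multigraph V) (F : Finset G.E) (v : V) :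
    (inc G F v).card ≤ deg G F v := by
  rw [inc, Finset.filter_or]
  exact Finset.card_union_le _ _

lemma card_nbr_le (G : Multigraph V) (F : Finset G.E) (v : V) :
    (nbr G F v).card ≤ deg G F v :=
  (Finset.card_union_le _ _).trans (Nat.add_le_add Finset.card_image_le Finset.card_image_le)

lemma mem_nbr (G : Multigraph V) (F : Finset G.E) (v w : V) :
    w ∈ nbr G F v ↔ ∃ e ∈ F, (G.fst e = v ∧ G.snd e = w) ∨ (G.snd e = v ∧ G.fst e = w) := by
  simp only [nbr, Finset.mem_union, Finset.mem_image, Finset.mem_filter]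
  constructor
  · rintro (⟨e, ⟨h1, h2⟩, h3⟩ | ⟨e, ⟨h1, h2⟩, h3⟩)
    · exact ⟨e, h1, Or.inl ⟨h2, h3⟩⟩
    · exact ⟨e, h1, Or.inr ⟨h2, h3⟩⟩
  · rintro ⟨e, h1, ⟨h2, h3⟩ | ⟨h2, h3⟩⟩
    · exact Or.inl ⟨e, ⟨h1, h2⟩, h3⟩
    · exact Or.inr ⟨e, ⟨h1, h2⟩, h3⟩

lemma mem_nbr_comm (G : Multigraph V) (F : Finset G.E) (v w : V) :
    w ∈ nbr G F v ↔ v ∈ nbr G F w := by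
  simp only [mem_nbr]
  constructor <;> rintro ⟨e, h, h1 | h1⟩ <;> exact ⟨e, h, by tauto⟩

lemma sum_deg (G : Multigraph V) (ρ : V) (A : Finset V) (hρ : ρ ∉ A) (F : Finset G.E)
    (hF : ∀ e ∈ F, G.fst e ∈ insert ρ A ∧ G.snd e ∈ insert ρ A) :
    deg G F ρ + ∑ v ∈ A, deg G F v = 2 * F.card := by
  rw [← Finset.sum_insert (f := deg G F) hρ]
  simp only [deg, Finset.sum_add_distrib]
  rw [← Finset.card_eq_sum_card_fiberwise (fun e he => (hF e he).1),
    ← Finset.card_eq_sum_card_fiberwise (fun e he => (hF e he).2)]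
  ring

/-- A vertex of degree at most two whose neighbours have degree at most two and differ from the root
is good: the test function is `1` at the vertex, `1/2` at its neighbours and `0` elsewhere, so that
its gradient is supported on at most four edges and is at most `1/2` on each of them. -/
lemma good_of_deg_two (G : Multigraph V) (ρ : V) (F : Finset G.E) (x : V) (hx : x ≠ ρ)
    (hd : deg G F x ≤ 2) (hρ : ρ ∉ nbr G F x) (hn : ∀ y ∈ nbr G F x, deg G F y ≤ 2) :
    Good G ρ F x := by
  refine ⟨fun v => if v = x then 1 else if v ∈ nbr G F x then 1 / 2 else 0, ?_, by simp, ?_⟩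
  · simp [hx.symm, hρ]
  set g : V → ℝ := fun v => if v = x then 1 else if v ∈ nbr G F x then 1 / 2 else 0 with hg
  let o : G.E → V := fun e => if G.fst e = x then G.snd e else G.fst e
  have ho : ∀ e ∈ inc G F x, o e ∈ nbr G F x := by
    intro e he
    rw [inc, Finset.mem_filter] at he
    rw [mem_nbr]
    refine ⟨e, he.1, ?_⟩
    by_cases h : G.fst e = x
    · simp [o, h]
    · have h' : G.snd e = x := he.2.resolve_left h
      simp [o, h, h']
  let S : Finset G.E := inc G F x ∪ (inc G F x).biUnion fun e => (inc G F (o e)).erase e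
  have hx2 : (inc G F x).card ≤ 2 := (card_inc_le G F x).trans hd
  have hScard : S.card ≤ 4 := by
    have h1 : ((inc G F x).biUnion fun e => (inc G F (o e)).erase e).card
        ≤ (inc G F x).card * 1 := by
      refine Finset.card_biUnion_le_card_mul _ _ _ fun e he => ?_
      have h2 : e ∈ inc G F (o e) := by
        have he' := he
        rw [inc, Finset.mem_filter] at he' ⊢
        refine ⟨he'.1, ?_⟩
        by_cases h : G.fst e = x
        · simp [o, h]
        · simp [o, h]
      rw [Finset.card_erase_of_mem h2]
      have := (card_inc_le G F (o e)).trans (hn _ (ho e he))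
      omega
    have := Finset.card_union_le (inc G F x)
      ((inc G F x).biUnion fun e => (inc G F (o e)).erase e)
    show (inc G F x ∪ _).card ≤ 4
    omega
  have hSF : S ⊆ F := by
    intro e he
    simp only [S, Finset.mem_union, Finset.mem_biUnion, Finset.mem_erase, inc,
      Finset.mem_filter] at he
    tauto
  have hnbrS : ∀ e ∈ F, ∀ y ∈ nbr G F x, (G.fst e = y ∨ G.snd e = y) → e ∈ S := by
    intro e he y hy hey
    by_cases hex : e ∈ inc G F x
    · exact Finset.mem_union_left _ hex
    · refine Finset.mem_union_right _ ?_
      rw [mem_nbr] at hy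
      obtain ⟨e', he', h⟩ := hy
      have hinc : e' ∈ inc G F x := by
        rw [inc, Finset.mem_filter]
        exact ⟨he', by tauto⟩
      rw [Finset.mem_biUnion]
      refine ⟨e', hinc, ?_⟩
      have hoe : o e' = y := by
        rcases h with h | h
        · simp [o, h.1, h.2]
        · by_cases h' : G.fst e' = x
          · simp only [o, h', if_true]
            rw [h.1, ← h', h.2]
          · simp only [o]
            rw [if_neg h', h.2]
      rw [Finset.mem_erase, hoe]
      refine ⟨?_, ?_⟩
      · rintro rfl
        exact hex hinc
      · rw [inc, Finset.mem_filter]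
        exact ⟨he, hey⟩
  have hzero : ∀ e ∈ F, e ∉ S → (g (G.fst e) - g (G.snd e)) ^ 2 = 0 := by
    intro e he heS
    have h1 : ¬ (G.fst e = x ∨ G.snd e = x) := fun h =>
      heS (Finset.mem_union_left _ (by rw [inc, Finset.mem_filter]; exact ⟨he, h⟩))
    have h2 : G.fst e ∉ nbr G F x := fun h => heS (hnbrS e he _ h (Or.inl rfl))
    have h3 : G.snd e ∉ nbr G F x := fun h => heS (hnbrS e he _ h (Or.inr rfl))
    push Not at h1
    simp [hg, h1.1, h1.2, h2, h3]
  have hquarter : ∀ e ∈ F, (g (G.fst e) - g (G.snd e)) ^ 2 ≤ 1 / 4 := by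
    intro e he
    have h1 : G.fst e = x → G.snd e ∈ nbr G F x := fun h => by
      rw [mem_nbr]; exact ⟨e, he, Or.inl ⟨h, rfl⟩⟩
    have h2 : G.snd e = x → G.fst e ∈ nbr G F x := fun h => by
      rw [mem_nbr]; exact ⟨e, he, Or.inr ⟨h, rfl⟩⟩
    simp only [hg]
    split_ifs <;> first | tauto | norm_num
  rw [← Finset.sum_subset hSF hzero]
  calc ∑ e ∈ S, (g (G.fst e) - g (G.snd e)) ^ 2 ≤ S.card • (1 / 4 : ℝ) :=
        Finset.sum_le_card_nsmul _ _ _ fun e he => hquarter e (hSF he)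
    _ ≤ 1 := by
        have : (S.card : ℝ) ≤ 4 := by exact_mod_cast hScard
        rw [nsmul_eq_mul]
        linarith

/-- The counting step when there are no leaves: a bad vertex has degree at least three, or is
adjacent to the root or to such a vertex, and the handshake identity bounds the number of these. -/
lemma card_bad_of_two_le_deg (G : Multigraph V) (ρ : V) (A : Finset V) (hρ : ρ ∉ A)
    (F : Finset G.E) (hF : ∀ e ∈ F, G.fst e ∈ insert ρ A ∧ G.snd e ∈ insert ρ A)
    (hdeg : ∀ v ∈ A, 2 ≤ deg G F v) :
    (A.filter fun x => ¬ Good G ρ F x).card + 8 * A.card ≤ 8 * F.card := by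
  set B := A.filter fun v => 3 ≤ deg G F v with hB
  have hsub : (A.filter fun x => ¬ Good G ρ F x) ⊆
      (B.biUnion fun v => insert v (nbr G F v)) ∪ nbr G F ρ := by
    intro x hx
    rw [Finset.mem_filter] at hx
    by_contra hcon
    apply hx.2
    simp only [Finset.mem_union, Finset.mem_biUnion, Finset.mem_insert, not_or, not_exists,
      not_and] at hcon
    have hxρ : x ≠ ρ := by
      rintro rfl
      exact hρ hx.1
    have hnB : ∀ y ∈ A, (x = y ∨ x ∈ nbr G F y) → deg G F y ≤ 2 := by
      intro y hy h
      by_contra hlt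
      have := hcon.1 y (by rw [hB, Finset.mem_filter]; exact ⟨hy, by omega⟩)
      tauto
    refine good_of_deg_two G ρ F x hxρ (hnB x hx.1 (Or.inl rfl)) ?_ ?_
    · rw [mem_nbr_comm]
      exact hcon.2
    · intro y hy
      have hy' := (mem_nbr_comm G F x y).1 hy
      have hyA : y ∈ insert ρ A := by
        rw [mem_nbr] at hy
        obtain ⟨e, he, h | h⟩ := hy
        · exact h.2 ▸ (hF e he).2
        · exact h.2 ▸ (hF e he).1
      rcases Finset.mem_insert.1 hyA with rfl | hyA
      · exact absurd hy' hcon.2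
      · exact hnB y hyA (Or.inr hy')
  have h1 := (Finset.card_le_card hsub).trans (Finset.card_union_le _ _)
  have h2 : (B.biUnion fun v => insert v (nbr G F v)).card ≤ ∑ v ∈ B, (deg G F v + 1) :=
    Finset.card_biUnion_le.trans (Finset.sum_le_sum fun v _ =>
      (Finset.card_insert_le _ _).trans (Nat.add_le_add_right (card_nbr_le G F v) 1))
  have h3 : ∑ v ∈ B, (deg G F v + 1) + 8 * A.card ≤ 4 * ∑ v ∈ A, deg G F v := by
    rw [hB, Finset.sum_filter, Finset.card_eq_sum_ones, Finset.mul_sum, Finset.mul_sum,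
      ← Finset.sum_add_distrib]
    refine Finset.sum_le_sum fun v hv => ?_
    have := hdeg v hv
    split_ifs <;> omega
  have h4 := card_nbr_le G F ρ
  have h5 := sum_deg G ρ A hρ F hF
  omega

/-- If every nonempty set of non-root vertices has an outgoing edge, the number of bad vertices is
at most eight times the excess of edges over non-root vertices. Leaves are pruned one at a time:
a leaf is good, and a test function on the pruned graph extends to the leaf without any cost. -/
lemma card_bad_le (G : Multigraph V) (ρ : V) (n : ℕ) :
    ∀ (A : Finset V) (F : Finset G.E), A.card = n → ρ ∉ A →
    (∀ e ∈ F, G.fst e ∈ insert ρ A ∧ G.snd e ∈ insert ρ A) →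
    (∀ U ⊆ A, U.Nonempty → ∃ e ∈ F, ¬ (G.fst e ∈ U ↔ G.snd e ∈ U)) →
    (A.filter fun x => ¬ Good G ρ F x).card + 8 * A.card ≤ 8 * F.card := by
  induction n with
  | zero =>
    intro A F hA _ _ _
    rw [Finset.card_eq_zero.1 hA]
    simp
  | succ n ih =>
    intro A F hA hρ hF hcut
    by_cases hdeg : ∀ v ∈ A, 2 ≤ deg G F v
    · exact card_bad_of_two_le_deg G ρ A hρ F hF hdeg
    push Not at hdeg
    obtain ⟨x, hxA, hxd⟩ := hdeg
    have hxρ : x ≠ ρ := by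
      rintro rfl
      exact hρ hxA
    -- `e₀` is the only edge at the leaf `x`, and it is not a loop.
    obtain ⟨e₀, he₀, hcut₀⟩ := hcut {x} (by simpa using hxA) (by simp)
    simp only [Finset.mem_singleton] at hcut₀
    have he₀inc : e₀ ∈ inc G F x := by
      rw [inc, Finset.mem_filter]
      exact ⟨he₀, by tauto⟩
    have huniq : ∀ e ∈ F, (G.fst e = x ∨ G.snd e = x) → e = e₀ := by
      intro e he h
      have h1 : (inc G F x).card ≤ 1 := (card_inc_le G F x).trans (by omega)
      refine Finset.card_le_one.1 h1 e ?_ e₀ he₀inc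
      rw [inc, Finset.mem_filter]
      exact ⟨he, h⟩
    have hA' : (A.erase x).card = n := by
      rw [Finset.card_erase_of_mem hxA, hA]; rfl
    have hoff : ∀ e ∈ F.erase e₀, G.fst e ≠ x ∧ G.snd e ≠ x := by
      intro e he
      rw [Finset.mem_erase] at he
      constructor <;> intro h
      · exact he.1 (huniq e he.2 (Or.inl h))
      · exact he.1 (huniq e he.2 (Or.inr h))
    have hF' : ∀ e ∈ F.erase e₀, G.fst e ∈ insert ρ (A.erase x) ∧
        G.snd e ∈ insert ρ (A.erase x) := by
      intro e he
      have h1 := hoff e he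
      have h2 := hF e (Finset.mem_of_mem_erase he)
      simp only [Finset.mem_insert, Finset.mem_erase] at h2 ⊢
      tauto
    have hcut' : ∀ U ⊆ A.erase x, U.Nonempty →
        ∃ e ∈ F.erase e₀, ¬ (G.fst e ∈ U ↔ G.snd e ∈ U) := by
      intro U hU hUne
      have hxU : x ∉ U := fun h => by simpa using hU h
      obtain ⟨e, he, hecut⟩ := hcut U (hU.trans (Finset.erase_subset _ _)) hUne
      by_cases hee : e = e₀
      · -- The edge found leads to the leaf, so any edge leaving `U ∪ {x}` avoids the leaf.
        subst hee
        obtain ⟨e', he', hecut'⟩ := hcut (insert x U)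
          (Finset.insert_subset hxA (hU.trans (Finset.erase_subset _ _)))
          (Finset.insert_nonempty _ _)
        have hne : e' ≠ e := by
          rintro rfl
          apply hecut'
          simp only [Finset.mem_insert]
          by_cases h1 : G.fst e' = x
          · have : G.fst e' ∉ U := h1 ▸ hxU
            tauto
          · have h2 : G.snd e' = x := by tauto
            have : G.snd e' ∉ U := h2 ▸ hxU
            tauto
        have hmem : e' ∈ F.erase e := Finset.mem_erase.2 ⟨hne, he'⟩
        have := hoff e' hmem
        refine ⟨e', hmem, ?_⟩
        simp only [Finset.mem_insert] at hecut'
        tauto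
      · exact ⟨e, Finset.mem_erase.2 ⟨hee, he⟩, hecut⟩
    have hIH := ih (A.erase x) (F.erase e₀) hA' (fun h => hρ (Finset.mem_of_mem_erase h)) hF' hcut'
    have hxgood : Good G ρ F x := by
      refine ⟨fun v => if v = x then 1 else 0, by simp [hxρ.symm], by simp, ?_⟩
      rw [← Finset.add_sum_erase _ _ he₀, Finset.sum_eq_zero, add_zero]
      · by_cases h1 : G.fst e₀ = x <;> by_cases h2 : G.snd e₀ = x <;> simp [h1, h2]
      · intro e he
        have := hoff e he
        simp [this.1, this.2]
    have hgood : ∀ y ∈ A.erase x, Good G ρ (F.erase e₀) y → Good G ρ F y := by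
      rintro y hy ⟨g, h0, h1, hE⟩
      have hyx : y ≠ x := Finset.ne_of_mem_erase hy
      -- Extend `g` to the leaf by its value at the other end of `e₀`.
      let c : ℝ := if G.fst e₀ = x then g (G.snd e₀) else g (G.fst e₀)
      refine ⟨fun v => if v = x then c else g v, by simp [hxρ.symm, h0], by simp [hyx, h1], ?_⟩
      rw [← Finset.add_sum_erase _ _ he₀]
      have hz : ((if G.fst e₀ = x then c else g (G.fst e₀)) -
          (if G.snd e₀ = x then c else g (G.snd e₀))) ^ 2 = 0 := by
        by_cases h1 : G.fst e₀ = x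
        · have h2 : G.snd e₀ ≠ x := by tauto
          simp [c, h1, h2]
        · have h2 : G.snd e₀ = x := by tauto
          simp [c, h1, h2]
      simp only [hz, zero_add]
      refine le_trans (le_of_eq (Finset.sum_congr rfl fun e he => ?_)) hE
      have := hoff e he
      simp [this.1, this.2]
    have hsub : (A.filter fun y => ¬ Good G ρ F y) ⊆
        (A.erase x).filter fun y => ¬ Good G ρ (F.erase e₀) y := by
      intro y hy
      rw [Finset.mem_filter] at hy ⊢
      have hyx : y ≠ x := by
        rintro rfl
        exact hy.2 hxgood
      have hyA := Finset.mem_erase.2 ⟨hyx, hy.1⟩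
      exact ⟨hyA, fun h => hy.2 (hgood y hyA h)⟩
    have h1 := Finset.card_le_card hsub
    have h2 := Finset.card_erase_of_mem he₀
    have h3 : 0 < F.card := Finset.card_pos.2 ⟨_, he₀⟩
    omega

/-- The total resistance is at least `n - 8 (|E| - n)`, where `n` is the number of non-root
vertices. -/
lemma nine_mul_le_Rtot (G : Multigraph V) (ρ : V) :
    9 * ((Fintype.card V - 1 : ℕ) : ℝ≥0∞) ≤ 8 * (G.edgeCount : ℝ≥0∞) + G.Rtot ρ := by
  by_cases htop : G.Rtot ρ = ⊤
  · simp [htop]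
  have hfin : ∀ x, G.effRes ρ x ≠ ⊤ := fun x =>
    ENNReal.sum_ne_top.1 htop x (Finset.mem_univ x)
  set A : Finset V := Finset.univ.erase ρ with hA
  have hAcard : A.card = Fintype.card V - 1 := by
    rw [hA, Finset.card_erase_of_mem (Finset.mem_univ _), Finset.card_univ]
  have hbad := card_bad_le G ρ A.card A Finset.univ rfl (by simp [hA])
    (fun e _ => by simp [hA]) (by
      rintro U hU ⟨x, hx⟩
      obtain ⟨e, he⟩ := exists_cut_edge G (hfin x) U hx (fun h => by simpa [hA] using hU h)
      exact ⟨e, Finset.mem_univ _, he⟩)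
  have hgood : ((A.filter fun x => Good G ρ Finset.univ x).card : ℝ≥0∞) ≤ G.Rtot ρ := by
    rw [Multigraph.Rtot, Finset.card_eq_sum_ones, Nat.cast_sum]
    refine (Finset.sum_le_sum fun x hx => ?_).trans
      (Finset.sum_le_sum_of_subset (Finset.subset_univ _))
    obtain ⟨g, h0, h1, hE⟩ := (Finset.mem_filter.1 hx).2
    simpa using one_le_effRes G g h0 h1 hE
  have hsplit := Finset.card_filter_add_card_filter_not (s := A)
    (fun x => Good G ρ Finset.univ x)
  have key : 9 * (Fintype.card V - 1) ≤ 8 * G.edgeCount +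
      (A.filter fun x => Good G ρ Finset.univ x).card := by
    rw [Finset.card_univ] at hbad
    rw [Multigraph.edgeCount]
    omega
  calc 9 * ((Fintype.card V - 1 : ℕ) : ℝ≥0∞)
      = ((9 * (Fintype.card V - 1) : ℕ) : ℝ≥0∞) := by push_cast; rfl
    _ ≤ ((8 * G.edgeCount + (A.filter fun x => Good G ρ Finset.univ x).card : ℕ) : ℝ≥0∞) := by
        exact_mod_cast key
    _ = 8 * (G.edgeCount : ℝ≥0∞) +
          ((A.filter fun x => Good G ρ Finset.univ x).card : ℝ≥0∞) := by push_cast; rfl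
    _ ≤ _ := by gcongr

/-- The bound `b_n(α) ≥ 9 - 4α` for `n ≥ 1`; its right-hand side tends to `1` as `α` decreases
to `2`. -/
lemma nine_le_bFun (n : ℕ) {α : ℝ} (hα : 0 ≤ α) :
    9 ≤ ENNReal.ofReal (4 * α) + bFun (n + 1) α := by
  rw [bFun, ENNReal.add_iInf]
  refine le_iInf fun ⟨⟨G, ρ⟩, hG⟩ => ?_
  have h := nine_mul_le_Rtot G ρ
  simp only [Fintype.card_fin, Nat.add_sub_cancel] at h
  have hn0 : ((n + 1 : ℕ) : ℝ≥0∞) ≠ 0 := by simp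
  have hnt : ((n + 1 : ℕ) : ℝ≥0∞) ≠ ⊤ := ENNReal.natCast_ne_top _
  have hE : 8 * (G.edgeCount : ℝ≥0∞) ≤ ENNReal.ofReal (4 * α) * ((n + 1 : ℕ) : ℝ≥0∞) := by
    have h1 : 8 * (G.edgeCount : ℝ≥0∞) = ENNReal.ofReal (8 * (G.edgeCount : ℝ)) := by
      rw [ENNReal.ofReal_mul (by norm_num), ENNReal.ofReal_natCast]
      norm_num
    rw [h1, ← ENNReal.ofReal_natCast (n + 1), ← ENNReal.ofReal_mul (by linarith)]
    refine ENNReal.ofReal_le_ofReal ?_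
    simp only at hG
    linarith
  have h2 : 9 * ((n + 1 : ℕ) : ℝ≥0∞) ≤
      (ENNReal.ofReal (4 * α) + G.rootedAvg ρ) * ((n + 1 : ℕ) : ℝ≥0∞) := by
    rw [add_mul, Multigraph.rootedAvg, Fintype.card_fin, Nat.add_sub_cancel,
      ENNReal.div_mul_cancel hn0 hnt]
    exact h.trans (by gcongr)
  exact (ENNReal.mul_le_mul_iff_left hn0 hnt).1 h2

/-! ### The star -/

/-- The star with centre `0` and `n` leaves. -/
def star (n : ℕ) : Multigraph (Fin (n + 1)) where
  E := Fin n
  fst := fun _ => 0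
  snd := Fin.succ

lemma effRes_star_le (n : ℕ) (x : Fin n) : (star n).effRes 0 x.succ ≤ 1 := by
  rw [Multigraph.effRes, if_neg (Fin.succ_ne_zero x).symm]
  let f : Fin n → ℝ := fun i => if i = x then 1 else 0
  have hf : (star n).IsUnitFlow 0 x.succ f := by
    constructor
    · show ∑ e : Fin n, ((if (0 : Fin (n + 1)) = 0 then f e else 0) -
        if e.succ = 0 then f e else 0) = 1
      simp [f, Fin.succ_ne_zero]
    · intro v hv hvx
      simp only [Multigraph.netFlow, star]
      refine Finset.sum_eq_zero fun e _ => ?_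
      by_cases he : e = x
      · subst he
        simp [hv.symm, hvx.symm]
      · simp [f, he]
  refine (iInf_le _ ⟨f, hf⟩).trans ?_
  rw [ENNReal.ofReal_le_one]
  show ∑ e : Fin n, f e ^ 2 ≤ 1
  simp [f]

lemma bFun_le_one (n : ℕ) {α : ℝ} (hα : 2 ≤ α) : bFun (n + 1) α ≤ 1 := by
  have hE : ((star (n + 1)).edgeCount : ℝ) ≤ α * ((n + 1 : ℕ) : ℝ) / 2 := by
    have : (star (n + 1)).edgeCount = n + 1 := Fintype.card_fin (n + 1)
    rw [this]
    have : (0 : ℝ) ≤ ((n + 1 : ℕ) : ℝ) := Nat.cast_nonneg _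
    nlinarith
  refine (iInf_le _ ⟨⟨star (n + 1), 0⟩, hE⟩).trans ?_
  simp only [Multigraph.rootedAvg, Fintype.card_fin, Nat.add_sub_cancel]
  refine ENNReal.div_le_of_le_mul ?_
  rw [one_mul, Multigraph.Rtot, Fin.sum_univ_succ]
  have h0 : (star (n + 1)).effRes 0 0 = 0 := by simp [Multigraph.effRes]
  rw [h0, zero_add]
  refine (Finset.sum_le_sum fun x _ => effRes_star_le (n + 1) x).trans ?_
  simp

/-! ### Gluing rooted graphs at their roots -/

section Glue

variable {V₁ V₂ W : Type} [Fintype V₁] [Fintype V₂] [Fintype W]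
  [DecidableEq V₁] [DecidableEq V₂] [DecidableEq W]

/-- Extending a flow by zero: effective resistances do not increase when passing from a graph to a
larger graph containing it. -/
lemma effRes_le_of_embedding (G : Multigraph V₁) (H : Multigraph W) (φ : V₁ → W)
    (hφ : Function.Injective φ) (ι : G.E → H.E) (hι : Function.Injective ι)
    (hfst : ∀ e, H.fst (ι e) = φ (G.fst e)) (hsnd : ∀ e, H.snd (ι e) = φ (G.snd e)) (x y : V₁) :
    H.effRes (φ x) (φ y) ≤ G.effRes x y := by
  by_cases hxy : x = y
  · simp [Multigraph.effRes, hxy]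
  rw [Multigraph.effRes, Multigraph.effRes, if_neg hxy, if_neg (hφ.ne hxy)]
  refine le_iInf fun ⟨f, hf⟩ => ?_
  let f' : H.E → ℝ := Function.extend ι f fun _ => 0
  have hin : ∀ e, f' (ι e) = f e := fun e => hι.extend_apply f _ e
  have hout : ∀ e ∉ Set.range ι, f' e = 0 := fun e he =>
    Function.extend_apply' f _ e he
  have hnet : ∀ w, H.netFlow f' w =
      ∑ e, ((if φ (G.fst e) = w then f e else 0) - (if φ (G.snd e) = w then f e else 0)) := by
    intro w
    rw [Multigraph.netFlow]
    refine (Fintype.sum_of_injective ι hι _ _ ?_ ?_).symm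
    · intro e he
      simp [hout e he]
    · intro e
      simp [hin, hfst, hsnd]
  have hnet' : ∀ v, H.netFlow f' (φ v) = G.netFlow f v := by
    intro v
    rw [hnet, Multigraph.netFlow]
    simp only [hφ.eq_iff]
  have hf' : H.IsUnitFlow (φ x) (φ y) f' := by
    refine ⟨by rw [hnet', hf.1], fun w hwx hwy => ?_⟩
    by_cases hw : w ∈ Set.range φ
    · obtain ⟨v, rfl⟩ := hw
      rw [hnet']
      exact hf.2 v (fun h => hwx (h ▸ rfl)) (fun h => hwy (h ▸ rfl))
    · rw [hnet]
      refine Finset.sum_eq_zero fun e _ => ?_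
      have h1 : φ (G.fst e) ≠ w := fun h => hw ⟨_, h⟩
      have h2 : φ (G.snd e) ≠ w := fun h => hw ⟨_, h⟩
      simp [h1, h2]
  refine (iInf_le _ ⟨f', hf'⟩).trans (le_of_eq ?_)
  congr 1
  refine (Fintype.sum_of_injective ι hι _ _ ?_ ?_).symm
  · intro e he
    simp [hout e he]
  · intro e
    simp [hin]

/-- The union of two graphs whose vertices have been mapped to a common vertex set. -/
def glue (G₁ : Multigraph V₁) (G₂ : Multigraph V₂) (φ₁ : V₁ → W) (φ₂ : V₂ → W) :
    Multigraph W where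
  E := G₁.E ⊕ G₂.E
  fst := Sum.elim (fun e => φ₁ (G₁.fst e)) fun e => φ₂ (G₂.fst e)
  snd := Sum.elim (fun e => φ₁ (G₁.snd e)) fun e => φ₂ (G₂.snd e)

end Glue

/-- Two rooted graphs with `n` and `m` non-root vertices can be glued at their roots, so that the
numbers of non-root vertices and of edges add up and the total resistance is subadditive. -/
lemma exists_glue {n m : ℕ} (G₁ : Multigraph (Fin (n + 1))) (ρ₁ : Fin (n + 1))
    (G₂ : Multigraph (Fin (m + 1))) (ρ₂ : Fin (m + 1)) :
    ∃ G : Multigraph (Fin (n + m + 1)), G.edgeCount = G₁.edgeCount + G₂.edgeCount ∧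
      G.Rtot 0 ≤ G₁.Rtot ρ₁ + G₂.Rtot ρ₂ := by
  -- Both vertex sets are renumbered so that the roots come first.
  let σ₁ : Equiv.Perm (Fin (n + 1)) := Equiv.swap ρ₁ 0
  let σ₂ : Equiv.Perm (Fin (m + 1)) := Equiv.swap ρ₂ 0
  let ψ₁ : Fin (n + 1) → Fin (n + m + 1) := Fin.cases 0 fun i => (Fin.castAdd m i).succ
  let ψ₂ : Fin (m + 1) → Fin (n + m + 1) := Fin.cases 0 fun i => (Fin.natAdd n i).succ
  have hψ₁ : Function.Injective ψ₁ := by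
    intro a b
    refine Fin.cases ?_ (fun i => ?_) a <;> refine Fin.cases ?_ (fun j => ?_) b
    · simp
    · simp [ψ₁, (Fin.succ_ne_zero _).symm]
    · simp [ψ₁, Fin.succ_ne_zero]
    · simp [ψ₁]
  have hψ₂ : Function.Injective ψ₂ := by
    intro a b
    refine Fin.cases ?_ (fun i => ?_) a <;> refine Fin.cases ?_ (fun j => ?_) b
    · simp
    · simp [ψ₂, (Fin.succ_ne_zero _).symm]
    · simp [ψ₂, Fin.succ_ne_zero]
    · simp [ψ₂]
  let φ₁ := ψ₁ ∘ σ₁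
  let φ₂ := ψ₂ ∘ σ₂
  have hφ₁ : Function.Injective φ₁ := hψ₁.comp σ₁.injective
  have hφ₂ : Function.Injective φ₂ := hψ₂.comp σ₂.injective
  have hρ₁ : φ₁ ρ₁ = 0 := by simp [φ₁, σ₁, ψ₁]
  have hρ₂ : φ₂ ρ₂ = 0 := by simp [φ₂, σ₂, ψ₂]
  let G := glue G₁ G₂ φ₁ φ₂
  refine ⟨G, ?_, ?_⟩
  · simp [G, glue, Multigraph.edgeCount]
  have h₁ : ∀ i : Fin n, G.effRes 0 (Fin.castAdd m i).succ ≤ G₁.effRes ρ₁ (σ₁.symm i.succ) := by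
    intro i
    have h := effRes_le_of_embedding G₁ G φ₁ hφ₁ Sum.inl Sum.inl_injective
      (fun _ => rfl) (fun _ => rfl) ρ₁ (σ₁.symm i.succ)
    rw [hρ₁] at h
    simpa [φ₁, ψ₁] using h
  have h₂ : ∀ i : Fin m, G.effRes 0 (Fin.natAdd n i).succ ≤ G₂.effRes ρ₂ (σ₂.symm i.succ) := by
    intro i
    have h := effRes_le_of_embedding G₂ G φ₂ hφ₂ Sum.inr Sum.inr_injective
      (fun _ => rfl) (fun _ => rfl) ρ₂ (σ₂.symm i.succ)
    rw [hρ₂] at h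
    simpa [φ₂, ψ₂] using h
  have e₁ : ∑ i : Fin n, G₁.effRes ρ₁ (σ₁.symm i.succ) ≤ G₁.Rtot ρ₁ := by
    rw [Multigraph.Rtot, ← Equiv.sum_comp σ₁.symm, Fin.sum_univ_succ]
    exact le_add_self
  have e₂ : ∑ i : Fin m, G₂.effRes ρ₂ (σ₂.symm i.succ) ≤ G₂.Rtot ρ₂ := by
    rw [Multigraph.Rtot, ← Equiv.sum_comp σ₂.symm, Fin.sum_univ_succ]
    exact le_add_self
  rw [Multigraph.Rtot, Fin.sum_univ_succ, Fin.sum_univ_add]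
  have h0 : G.effRes 0 0 = 0 := by simp [Multigraph.effRes]
  rw [h0, zero_add]
  exact add_le_add ((Finset.sum_le_sum fun i _ => h₁ i).trans e₁)
    ((Finset.sum_le_sum fun i _ => h₂ i).trans e₂)

lemma mul_bFun (n : ℕ) (hn : 0 < n) (α : ℝ) :
    (n : ℝ≥0∞) * bFun n α =
      ⨅ G : {p : Multigraph (Fin (n + 1)) × Fin (n + 1) // (p.1.edgeCount : ℝ) ≤ α * n / 2},
        G.1.1.Rtot G.1.2 := by
  have hn0 : (n : ℝ≥0∞) ≠ 0 := by exact_mod_cast hn.ne'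
  have hnt : (n : ℝ≥0∞) ≠ ⊤ := ENNReal.natCast_ne_top _
  rw [bFun, ENNReal.mul_iInf_of_ne hn0 hnt]
  refine iInf_congr fun G => ?_
  rw [Multigraph.rootedAvg, Fintype.card_fin, Nat.add_sub_cancel, ENNReal.mul_div_cancel hn0 hnt]

lemma add_mul_bFun_le {n m : ℕ} (hn : 0 < n) (hm : 0 < m) {x y γ : ℝ}
    (h : x * n + y * m ≤ γ * (n + m)) :
    ((n + m : ℕ) : ℝ≥0∞) * bFun (n + m) γ ≤ n * bFun n x + m * bFun m y := by
  rw [mul_bFun n hn, mul_bFun m hm, mul_bFun (n + m) (by omega)]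
  refine ENNReal.le_iInf_add_iInf fun ⟨⟨G₁, ρ₁⟩, h₁⟩ ⟨⟨G₂, ρ₂⟩, h₂⟩ => ?_
  obtain ⟨G, hE, hR⟩ := exists_glue G₁ ρ₁ G₂ ρ₂
  refine (iInf_le _ ⟨⟨G, 0⟩, ?_⟩).trans hR
  simp only at h₁ h₂ ⊢
  rw [hE]
  push_cast
  linarith

/-! ### Passing to the limit -/

section Limit

variable {b : ℝ → ℝ≥0∞}

/-- Convexity, for interior weights and ordered points. With `y ≤ x`, giving the graphs of
density `x` the share `⌊tN⌋` of the `N` vertices keeps the glued graph within the edge budget. -/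
lemma convex_aux
    (hb : ∀ α : ℝ, 2 ≤ α →
      Filter.Tendsto (fun n : ℕ => bFun (n + 1) α) Filter.atTop (nhds (b α)))
    (hb1 : ∀ α : ℝ, 2 ≤ α → b α ≤ 1) {x y t : ℝ} (hx : 2 ≤ x) (hy : 2 ≤ y) (hyx : y ≤ x)
    (ht0 : 0 < t) (ht1 : t < 1) :
    b (t * x + (1 - t) * y) ≤ ENNReal.ofReal t * b x + ENNReal.ofReal (1 - t) * b y := by
  have hγ : 2 ≤ t * x + (1 - t) * y := by nlinarith
  have hlim : ∀ α : ℝ, 2 ≤ α →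
      Filter.Tendsto (fun n : ℕ => bFun n α) Filter.atTop (nhds (b α)) := fun α hα =>
    (Filter.tendsto_add_atTop_iff_nat 1).1 (hb α hα)
  let k : ℕ → ℕ := fun N => ⌊t * N⌋₊
  let l : ℕ → ℕ := fun N => N - k N
  have hkle : ∀ N, (k N : ℝ) ≤ t * N := fun N => Nat.floor_le (by positivity)
  have hkN : ∀ N, k N ≤ N := by
    intro N
    have h1 := hkle N
    have h2 : (0 : ℝ) ≤ N := Nat.cast_nonneg N
    have h3 : (k N : ℝ) ≤ N := by nlinarith
    exact_mod_cast h3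
  have hkl : ∀ N, k N + l N = N := fun N => Nat.add_sub_cancel' (hkN N)
  have hkt : Filter.Tendsto (fun N => (k N : ℝ) / N) Filter.atTop (nhds t) :=
    (tendsto_nat_floor_mul_div_atTop ht0.le).comp tendsto_natCast_atTop_atTop
  have hlt : Filter.Tendsto (fun N => (l N : ℝ) / N) Filter.atTop (nhds (1 - t)) := by
    refine (hkt.const_sub 1).congr' ?_
    filter_upwards [Filter.eventually_gt_atTop 0] with N hN
    have : (N : ℝ) ≠ 0 := by exact_mod_cast hN.ne'
    rw [eq_div_iff this, sub_mul, div_mul_cancel₀ _ this, one_mul, Nat.cast_sub (hkN N)]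
  have hktop : Filter.Tendsto k Filter.atTop Filter.atTop :=
    tendsto_nat_floor_atTop.comp
      (Filter.Tendsto.const_mul_atTop ht0 tendsto_natCast_atTop_atTop)
  have hltop : Filter.Tendsto l Filter.atTop Filter.atTop := by
    rw [← tendsto_natCast_atTop_iff (R := ℝ)]
    refine Filter.tendsto_atTop_mono (f := fun N : ℕ => (1 - t) * (N : ℝ)) (fun N => ?_)
      (Filter.Tendsto.const_mul_atTop (by linarith) tendsto_natCast_atTop_atTop)
    have h1 := hkle N
    simp only [l, Nat.cast_sub (hkN N)]
    linarith
  have hR : Filter.Tendsto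
      (fun N => ENNReal.ofReal ((k N : ℝ) / N) * bFun (k N) x +
        ENNReal.ofReal ((l N : ℝ) / N) * bFun (l N) y) Filter.atTop
      (nhds (ENNReal.ofReal t * b x + ENNReal.ofReal (1 - t) * b y)) := by
    refine Filter.Tendsto.add ?_ ?_
    · exact ENNReal.Tendsto.mul (ENNReal.tendsto_ofReal hkt)
        (Or.inr (ne_top_of_le_ne_top ENNReal.one_ne_top (hb1 x hx)))
        ((hlim x hx).comp hktop) (Or.inr ENNReal.ofReal_ne_top)
    · exact ENNReal.Tendsto.mul (ENNReal.tendsto_ofReal hlt)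
        (Or.inr (ne_top_of_le_ne_top ENNReal.one_ne_top (hb1 y hy)))
        ((hlim y hy).comp hltop) (Or.inr ENNReal.ofReal_ne_top)
  refine le_of_tendsto_of_tendsto (hlim _ hγ) hR ?_
  filter_upwards [Filter.eventually_gt_atTop 0, hktop.eventually_gt_atTop 0,
    hltop.eventually_gt_atTop 0] with N hN hk hl
  have hN0 : (N : ℝ≥0∞) ≠ 0 := by exact_mod_cast hN.ne'
  have hNt : (N : ℝ≥0∞) ≠ ⊤ := ENNReal.natCast_ne_top _
  have hNr : (0 : ℝ) < N := by exact_mod_cast hN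
  have hsum : (k N : ℝ) + l N = N := by exact_mod_cast hkl N
  have hmain := add_mul_bFun_le (x := x) (y := y) (γ := t * x + (1 - t) * y) hk hl (by
    rw [hsum]
    have h1 : (l N : ℝ) = N - k N := by linarith
    rw [h1]
    nlinarith [mul_nonneg (sub_nonneg.2 (hkle N)) (sub_nonneg.2 hyx)])
  rw [hkl N] at hmain
  have hcoef : ∀ j : ℕ, (N : ℝ≥0∞) * ENNReal.ofReal ((j : ℝ) / N) = j := by
    intro j
    rw [← ENNReal.ofReal_natCast N, ← ENNReal.ofReal_mul hNr.le,
      mul_div_cancel₀ _ hNr.ne', ENNReal.ofReal_natCast]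
  rw [← ENNReal.mul_le_mul_iff_right hN0 hNt, mul_add, ← mul_assoc, ← mul_assoc, hcoef, hcoef]
  exact hmain

lemma convex
    (hb : ∀ α : ℝ, 2 ≤ α →
      Filter.Tendsto (fun n : ℕ => bFun (n + 1) α) Filter.atTop (nhds (b α)))
    (hb1 : ∀ α : ℝ, 2 ≤ α → b α ≤ 1) {x y t : ℝ} (hx : 2 ≤ x) (hy : 2 ≤ y)
    (ht0 : 0 ≤ t) (ht1 : t ≤ 1) :
    b (t * x + (1 - t) * y) ≤ ENNReal.ofReal t * b x + ENNReal.ofReal (1 - t) * b y := by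
  rcases ht0.eq_or_lt with rfl | ht0
  · simp
  rcases ht1.eq_or_lt with rfl | ht1
  · simp
  rcases le_total y x with h | h
  · exact convex_aux hb hb1 hx hy h ht0 ht1
  · have := convex_aux hb hb1 (t := 1 - t) hy hx h (by linarith) (by linarith)
    rw [sub_sub_cancel] at this
    rw [add_comm (t * x), add_comm (ENNReal.ofReal t * _)]
    exact this

end Limit

end RootedResistance

/-- **Lemma (convexity and continuity of `b`).** If `b : ℝ → ℝ≥0∞` is the limit function
`b(α) = lim_{n→∞} b_n(α)` (for `α ≥ 2`), then `b` is convex and continuous on `[2, ∞)`. -/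
theorem stmt3 (b : ℝ → ℝ≥0∞)
    (hb : ∀ α : ℝ, 2 ≤ α →
      Filter.Tendsto (fun n : ℕ => bFun (n + 1) α) Filter.atTop (nhds (b α))) :
    (∀ x ∈ Set.Ici (2 : ℝ), ∀ y ∈ Set.Ici (2 : ℝ), ∀ t : ℝ, 0 ≤ t → t ≤ 1 →
        b (t * x + (1 - t) * y) ≤ ENNReal.ofReal t * b x + ENNReal.ofReal (1 - t) * b y) ∧
      ContinuousOn b (Set.Ici (2 : ℝ)) := by
  have hb1 : ∀ α : ℝ, 2 ≤ α → b α ≤ 1 := fun α hα =>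
    le_of_tendsto' (hb α hα) fun n => RootedResistance.bFun_le_one n hα
  have hb9 : ∀ α : ℝ, 2 ≤ α → 9 ≤ ENNReal.ofReal (4 * α) + b α := fun α hα =>
    ge_of_tendsto' (tendsto_const_nhds.add (hb α hα)) fun n =>
      RootedResistance.nine_le_bFun n (by linarith)
  have hbt : ∀ α : ℝ, 2 ≤ α → b α ≠ ⊤ := fun α hα =>
    ne_top_of_le_ne_top ENNReal.one_ne_top (hb1 α hα)
  have hconv : ∀ x ∈ Set.Ici (2 : ℝ), ∀ y ∈ Set.Ici (2 : ℝ), ∀ t : ℝ, 0 ≤ t → t ≤ 1 →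
      b (t * x + (1 - t) * y) ≤ ENNReal.ofReal t * b x + ENNReal.ofReal (1 - t) * b y :=
    fun x hx y hy t ht0 ht1 => RootedResistance.convex hb hb1 hx hy ht0 ht1
  refine ⟨hconv, ?_⟩
  let g : ℝ → ℝ := fun α => (b α).toReal
  have hbg : ∀ α : ℝ, 2 ≤ α → b α = ENNReal.ofReal (g α) := fun α hα =>
    (ENNReal.ofReal_toReal (hbt α hα)).symm
  have hg0 : ∀ α, 0 ≤ g α := fun α => ENNReal.toReal_nonneg
  have hg1 : ∀ α : ℝ, 2 ≤ α → g α ≤ 1 := fun α hα => by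
    simpa using ENNReal.toReal_mono ENNReal.one_ne_top (hb1 α hα)
  have hg9 : ∀ α : ℝ, 2 ≤ α → 9 - 4 * α ≤ g α := by
    intro α hα
    have h := hb9 α hα
    rw [hbg α hα, ← ENNReal.ofReal_add (by linarith) (hg0 α),
      ENNReal.le_ofReal_iff_toReal_le (by simp) (by linarith [hg0 α])] at h
    norm_num at h
    linarith
  have hgconv : ConvexOn ℝ (Set.Ici 2) g := by
    refine ⟨convex_Ici 2, fun x hx y hy s t hs ht hst => ?_⟩
    obtain rfl : t = 1 - s := by linarith
    have hz : (2 : ℝ) ≤ s * x + (1 - s) * y := by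
      have hx' : (2 : ℝ) ≤ x := hx
      have hy' : (2 : ℝ) ≤ y := hy
      nlinarith
    have h := hconv x hx y hy s hs (by linarith)
    rw [hbg _ hz, hbg x hx, hbg y hy, ← ENNReal.ofReal_mul hs, ← ENNReal.ofReal_mul ht,
      ← ENNReal.ofReal_add (mul_nonneg hs (hg0 _)) (mul_nonneg ht (hg0 _)),
      ENNReal.ofReal_le_ofReal_iff (add_nonneg (mul_nonneg hs (hg0 _)) (mul_nonneg ht (hg0 _)))]
      at h
    simpa only [smul_eq_mul] using h
  have hgcont : ContinuousOn g (Set.Ici 2) := by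
    intro α hα
    rcases (show (2 : ℝ) ≤ α from hα).eq_or_lt with rfl | hlt
    · -- At the end point `2`, squeeze `g` between `9 - 4α` and `1`.
      have hg2 : g 2 = 1 := le_antisymm (hg1 2 le_rfl) (by linarith [hg9 2 le_rfl])
      rw [ContinuousWithinAt, hg2]
      refine tendsto_of_tendsto_of_tendsto_of_le_of_le' (g := fun α : ℝ => 9 - 4 * α)
        (h := fun _ => 1) ?_ tendsto_const_nhds ?_ ?_
      · have h : Filter.Tendsto (fun α : ℝ => 9 - 4 * α) (nhds 2) (nhds (9 - 4 * 2)) :=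
          (continuous_const.sub (continuous_const.mul continuous_id)).tendsto 2
        norm_num at h
        exact h.mono_left nhdsWithin_le_nhds
      · exact eventually_nhdsWithin_of_forall hg9
      · exact eventually_nhdsWithin_of_forall hg1
    · have h := hgconv.continuousOn_interior
      rw [interior_Ici] at h
      exact (h.continuousAt (Ioi_mem_nhds hlt)).continuousWithinAt
  exact (ENNReal.continuous_ofReal.comp_continuousOn hgcont).congr hbg
end

section
/- For every integer α ≥ 3, b(α) ≤ (α−1)/(α(α−2)) and a(α) ≤ 2(α−1)/(α(α−2)). -/
/-!
Since `L` is the limit of the whole sequence, it is enough to build good rooted networks at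
arbitrarily large sizes (`exists_good`). Write `α = d + 3`.

A finite group generated by `α` involutions with no short relations (`exists_involutions`) gives
an `α`-regular bipartite graph, two copies of `P × ℤ/(k + 1)`, in which every ball of
radius `l` is a tree. From any vertex a unit current can be spread evenly through such a
ball, at an energy at most the resistance `(α - 1) / (α (α - 2))` from a vertex of the infinite
regular tree to infinity (`spread`). The edges of two of the colours split the graph into cycles
that meet a sparse set of sinks, attached to the root, at least once every `2k + 2` steps, so the
current on the sphere of radius `l` can be sent along the cycles to the root. As
it is spread over exponentially many vertices and each edge lies on at most `2k + 2` routes, this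
adds an energy tending to `0` as `l → ∞` with `k` fixed (`site_flow`). No expansion property is
needed. The edges at the sinks exceed the budget; this is repaired by two pendant neighbours of
the root per sink, a vanishing proportion as `k → ∞`.

For the unrooted average the same network serves: if `f x` is a unit flow from `x` to
the root, then `f x - f y` is one from `x` to `y`, and
`∑_{x,y} ‖f x - f y‖² ≤ 2 |V| ∑_x ‖f x‖²` (`averages_le`).
-/

open scoped ENNReal

set_option linter.unusedSectionVars false

attribute [local instance 10] Classical.propDecidable

open Multigraph

namespace RegularTree
open Finset

/-! ### Flows and effective resistance -/

section Flow
variable {V : Type} [Fintype V] [DecidableEq V]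

/-- The net flow out of `v`, as a linear functional of the current assignment. -/
noncomputable def netLin (G : Multigraph V) (v : V) : (G.E → ℝ) →ₗ[ℝ] ℝ where
  toFun f := G.netFlow f v
  map_add' f g := by
    simp only [netFlow, ← sum_add_distrib]
    refine sum_congr rfl fun e _ => ?_
    simp only [Pi.add_apply]
    split_ifs <;> ring
  map_smul' c f := by
    simp only [netFlow, RingHom.id_apply, smul_eq_mul, mul_sum]
    refine sum_congr rfl fun e _ => ?_
    simp only [Pi.smul_apply, smul_eq_mul]
    split_ifs <;> ring

lemma netLin_single (G : Multigraph V) [DecidableEq G.E] (v : V) (e : G.E) (c : ℝ) :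
    netLin G v (Pi.single e c) =
      c * ((if v = G.fst e then 1 else 0) - (if v = G.snd e then 1 else 0)) := by
  change G.netFlow _ v = _
  unfold netFlow
  rw [sum_eq_single e]
  · simp only [Pi.single_eq_same, eq_comm (a := v)]
    split_ifs <;> ring
  · intro e' _ h
    simp [Pi.single_eq_of_ne h]
  · simp

/-- `f` carries one unit of current from `x` to `y`, with the current law imposed at every
vertex; when `x = y` this says that `f` is a circulation. -/
def Carries (G : Multigraph V) (x y : V) (f : G.E → ℝ) : Prop :=
  ∀ v, netLin G v f = (if v = x then 1 else 0) - (if v = y then 1 else 0)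

lemma effRes_le (G : Multigraph V) {x y : V} {f : G.E → ℝ} (hf : Carries G x y f) :
    G.effRes x y ≤ ENNReal.ofReal (∑ e, f e ^ 2) := by
  unfold effRes
  split_ifs with h
  · exact zero_le
  · refine iInf_le_of_le ⟨f, ?_, ?_⟩ le_rfl
    · have : G.netFlow f x = _ := hf x
      simpa [h] using this
    · intro v hx hy
      have : G.netFlow f v = _ := hf v
      simpa [hx, hy] using this

/-- Expanding the squares, `∑_{x,y} (a x - a y)² = 2 |V| ∑ a² - 2 (∑ a)²`; dropping the last
term bounds the average resistance between two vertices by twice the average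
resistance to the root. -/
lemma sum_sub_sq_le (a : V → ℝ) :
    ∑ x, ∑ y, (a x - a y) ^ 2 ≤ 2 * Fintype.card V * ∑ x, a x ^ 2 := by
  have h : ∑ x, ∑ y, (a x - a y) ^ 2 =
      2 * Fintype.card V * (∑ x, a x ^ 2) - 2 * (∑ x, a x) ^ 2 := by
    have h1 : ∀ x y, (a x - a y) ^ 2 = a x ^ 2 + a y ^ 2 - 2 * (a x * a y) := by
      intro x y; ring
    simp only [h1, sum_sub_distrib, sum_add_distrib, ← mul_sum, sum_const, card_univ,
      nsmul_eq_mul, ← sum_mul]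
    ring
  nlinarith [sq_nonneg (∑ x, a x)]

/-- A family of flows to the root with small total energy bounds both averages. -/
lemma averages_le {n : ℕ} (hn : 0 < n) (G : Multigraph (Fin (n + 1))) (ρ : Fin (n + 1))
    (f : Fin (n + 1) → G.E → ℝ) (hf : ∀ x, Carries G x ρ (f x)) (C : ℝ) (hC0 : 0 ≤ C)
    (hC : ∑ x, ∑ e, f x e ^ 2 ≤ n * C) :
    rootedAvg G ρ ≤ ENNReal.ofReal C ∧ avgOrdRes G ≤ ENNReal.ofReal (2 * C) := by
  constructor
  · unfold rootedAvg
    refine ENNReal.div_le_of_le_mul ?_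
    have h1 : G.Rtot ρ ≤ ENNReal.ofReal (∑ x, ∑ e, f x e ^ 2) := by
      rw [ENNReal.ofReal_sum_of_nonneg fun x _ => sum_nonneg fun e _ => sq_nonneg _]
      refine sum_le_sum fun x _ => ?_
      have : Carries G ρ x (-f x) := by
        intro v
        rw [map_neg, hf x v]; ring
      simpa using effRes_le G this
    refine h1.trans ?_
    rw [Fintype.card_fin, Nat.add_sub_cancel, ← ENNReal.ofReal_natCast, ← ENNReal.ofReal_mul hC0]
    exact ENNReal.ofReal_le_ofReal (by linarith)
  · unfold avgOrdRes
    refine ENNReal.div_le_of_le_mul ?_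
    have h1 : ∑ x, ∑ y, G.effRes x y ≤ ENNReal.ofReal (∑ x, ∑ y, ∑ e, (f x e - f y e) ^ 2) := by
      rw [ENNReal.ofReal_sum_of_nonneg fun x _ => sum_nonneg fun y _ =>
        sum_nonneg fun e _ => sq_nonneg _]
      refine sum_le_sum fun x _ => ?_
      rw [ENNReal.ofReal_sum_of_nonneg fun y _ => sum_nonneg fun e _ => sq_nonneg _]
      refine sum_le_sum fun y _ => ?_
      have : Carries G x y (f x - f y) := by
        intro v
        rw [map_sub, hf x v, hf y v]; ring
      simpa using effRes_le G this
    refine h1.trans ?_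
    rw [← ENNReal.ofReal_natCast, ← ENNReal.ofReal_pow (Nat.cast_nonneg _),
      ← ENNReal.ofReal_mul (by positivity)]
    refine ENNReal.ofReal_le_ofReal ?_
    have h2 : ∑ x, ∑ y, ∑ e, (f x e - f y e) ^ 2 = ∑ e, ∑ x, ∑ y, (f x e - f y e) ^ 2 := by
      rw [sum_comm]
      rw [sum_congr rfl fun x _ => sum_comm, sum_comm]
      exact sum_congr rfl fun _ _ => sum_comm
    rw [h2]
    have h3 : ∑ e, ∑ x, ∑ y, (f x e - f y e) ^ 2 ≤
        ∑ e, 2 * (Fintype.card (Fin (n + 1)) : ℝ) * ∑ x, f x e ^ 2 :=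
      sum_le_sum fun e _ => sum_sub_sq_le fun x => f x e
    refine h3.trans ?_
    rw [← mul_sum, sum_comm, Fintype.card_fin]
    push_cast
    have : (0 : ℝ) ≤ n := Nat.cast_nonneg n
    calc 2 * ((n : ℝ) + 1) * ∑ x, ∑ e, f x e ^ 2 ≤ 2 * ((n : ℝ) + 1) * (n * C) := by gcongr
      _ ≤ 2 * C * (n + 1) ^ 2 := by nlinarith [mul_nonneg this hC0]

/-- The bounds of `averages_le` for a rooted graph on an arbitrary vertex type, transported
to `Fin (n + 1)`. -/
lemma bFun_aFun_le {n : ℕ} (hn : 0 < n) (hcard : Fintype.card V = n + 1) (G : Multigraph V)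
    (ρ : V) (f : V → G.E → ℝ) (hf : ∀ x, Carries G x ρ (f x)) (α C : ℝ) (hα : 0 ≤ α)
    (hC0 : 0 ≤ C) (hE : (G.edgeCount : ℝ) ≤ α * n / 2) (hC : ∑ x, ∑ e, f x e ^ 2 ≤ n * C) :
    bFun n α ≤ ENNReal.ofReal C ∧ aFun (n + 1) α ≤ ENNReal.ofReal (2 * C) := by
  let φ : V ≃ Fin (n + 1) := Fintype.equivFinOfCardEq hcard
  let G' : Multigraph (Fin (n + 1)) := ⟨G.E, φ ∘ G.fst, φ ∘ G.snd⟩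
  have hnet : ∀ (g : G.E → ℝ) v, netLin G' v g = netLin G (φ.symm v) g := by
    intro g v
    change G'.netFlow g v = G.netFlow g (φ.symm v)
    unfold netFlow
    refine sum_congr rfl fun e _ => ?_
    simp only [G', Function.comp_apply, Equiv.eq_symm_apply]
  have hcar : ∀ x, Carries G' x (φ ρ) (f (φ.symm x)) := by
    intro x v
    rw [hnet, hf]
    simp [Equiv.symm_apply_eq]
  obtain ⟨hB, hA⟩ := averages_le hn G' (φ ρ) (fun x => f (φ.symm x)) hcar C hC0 (by
    refine le_of_eq_of_le ?_ hC
    exact φ.symm.sum_comp fun x => ∑ e, f x e ^ 2)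
  refine ⟨iInf_le_of_le ⟨(G', φ ρ), hE⟩ hB, iInf_le_of_le ⟨G', hE.trans ?_⟩ hA⟩
  push_cast
  linarith

end Flow

/-! ### Superpositions of edge currents -/

section Superpose
variable {E ι : Type} [Fintype E] [DecidableEq E]

lemma sum_abs_single (e : E) (c : ℝ) :
    ∑ e', |(Pi.single e c : E → ℝ) e'| = |c| := by
  rw [sum_eq_single e]
  · simp
  · intro e' _ h
    simp [Pi.single_eq_of_ne h]
  · simp

lemma sum_sq_single (e : E) (c : ℝ) :
    ∑ e', (Pi.single e c : E → ℝ) e' ^ 2 = c ^ 2 := by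
  rw [sum_eq_single e]
  · simp
  · intro e' _ h
    simp [Pi.single_eq_of_ne h]
  · simp

/-- The energy of currents running through pairwise distinct edges is additive. -/
lemma energy_disjoint (I : Finset ι) (e : ι → E) (he : Set.InjOn e I) (y : ι → ℝ) :
    ∑ e', (∑ i ∈ I, Pi.single (e i) (y i) : E → ℝ) e' ^ 2 = ∑ i ∈ I, y i ^ 2 := by
  classical
  induction I using Finset.induction_on with
  | empty => simp
  | insert a s ha ih =>
    rw [sum_insert ha, sum_insert ha, ← ih (he.mono (by simp)), ← sum_sq_single (e a) (y a),
      ← sum_add_distrib]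
    refine sum_congr rfl fun e' _ => ?_
    rw [Pi.add_apply]
    by_cases h : e' = e a
    · subst h
      have : (∑ i ∈ s, Pi.single (e i) (y i) : E → ℝ) (e a) = 0 := by
        rw [Finset.sum_apply]
        refine sum_eq_zero fun i hi => Pi.single_eq_of_ne ?_ _
        intro h
        have := he (by simp) (by simp [hi]) h
        exact ha (this ▸ hi)
      rw [this]; ring
    · rw [Pi.single_eq_of_ne h]; ring

lemma sum_abs_le (I : Finset ι) (F : ι → E → ℝ) :
    ∑ e, |(∑ i ∈ I, F i : E → ℝ) e| ≤ ∑ i ∈ I, ∑ e, |F i e| := by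
  rw [sum_comm]
  refine sum_le_sum fun e _ => ?_
  rw [Finset.sum_apply]
  exact abs_sum_le_sum_abs _ _

/-- A perturbation `g` that is uniformly small on edges, while both flows have bounded
total current, changes the energy only a little. -/
lemma energy_add_le (f g : E → ℝ) {A B M : ℝ} (hM : ∀ e, |g e| ≤ M)
    (hf : ∑ e, |f e| ≤ A) (hg : ∑ e, |g e| ≤ B) (hM0 : 0 ≤ M) :
    ∑ e, (f + g) e ^ 2 ≤ ∑ e, f e ^ 2 + M * (2 * A + B) := by
  have h : ∀ e, (f + g) e ^ 2 ≤ f e ^ 2 + M * (2 * |f e| + |g e|) := by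
    intro e
    have h1 : g e * (2 * f e + g e) ≤ M * (2 * |f e| + |g e|) := by
      refine (le_abs_self _).trans ?_
      rw [abs_mul]
      refine mul_le_mul (hM e) ?_ (abs_nonneg _) hM0
      refine (abs_add_le _ _).trans ?_
      rw [abs_mul, abs_two]
    rw [Pi.add_apply]
    nlinarith
  refine (sum_le_sum fun e _ => h e).trans ?_
  rw [sum_add_distrib, ← mul_sum, sum_add_distrib, ← mul_sum]
  gcongr

end Superpose

/-! ### Reduced words -/

section Words
variable (d : ℕ)

/-- The letters that may be put in front of `w` without creating a repetition. -/
noncomputable def nextLetters (w : List (Fin (d + 3))) : Finset (Fin (d + 3)) :=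
  univ.filter fun a => ∀ b ∈ w.head?, a ≠ b

/-- The reduced words (no two consecutive letters equal) of length `j`. -/
noncomputable def words : ℕ → Finset (List (Fin (d + 3)))
  | 0 => {[]}
  | j + 1 => (words j).biUnion fun w => (nextLetters d w).image fun a => a :: w

/-- The reciprocal of the number of reduced words of length `j`. -/
noncomputable def weight : ℕ → ℝ
  | 0 => 1
  | j + 1 => 1 / ((d + 3) * (d + 2) ^ j)

variable {d}

lemma mem_words {j : ℕ} {w : List (Fin (d + 3))} :
    w ∈ words d j ↔ w.IsChain (· ≠ ·) ∧ w.length = j := by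
  induction j generalizing w with
  | zero =>
    simp only [words, mem_singleton, List.length_eq_zero_iff]
    constructor
    · rintro rfl; simp
    · exact fun h => h.2
  | succ j ih =>
    simp only [words, mem_biUnion, mem_image, ih, nextLetters, mem_filter, mem_univ, true_and]
    constructor
    · rintro ⟨w, ⟨h1, h2⟩, a, ha, rfl⟩
      exact ⟨List.isChain_cons.2 ⟨ha, h1⟩, by simp [h2]⟩
    · rintro ⟨h1, h2⟩
      cases w with
      | nil => simp at h2
      | cons a w =>
        rw [List.isChain_cons] at h1
        exact ⟨w, ⟨h1.2, by simpa using h2⟩, a, h1.1, rfl⟩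

lemma cons_chain {w : List (Fin (d + 3))} {a : Fin (d + 3)} (hw : w.IsChain (· ≠ ·))
    (ha : a ∈ nextLetters d w) : (a :: w).IsChain (· ≠ ·) :=
  List.isChain_cons.2 ⟨(mem_filter.1 ha).2, hw⟩

lemma sum_words_succ {M : Type} [AddCommMonoid M] (j : ℕ) (F : List (Fin (d + 3)) → M) :
    ∑ u ∈ words d (j + 1), F u = ∑ w ∈ words d j, ∑ a ∈ nextLetters d w, F (a :: w) := by
  rw [words, sum_biUnion]
  · refine sum_congr rfl fun w _ => ?_
    rw [sum_image]
    intro a _ b _ h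
    simpa using h
  · intro w _ w' _ h
    rw [Function.onFun, Finset.disjoint_left]
    intro u hu hu'
    simp only [mem_image] at hu hu'
    obtain ⟨a, _, rfl⟩ := hu
    obtain ⟨b, _, hb⟩ := hu'
    simp only [List.cons.injEq] at hb
    exact h hb.2.symm

lemma weight_children {j : ℕ} {w : List (Fin (d + 3))} (hw : w ∈ words d j) :
    ∑ _a ∈ nextLetters d w, weight d (j + 1) = weight d j := by
  rw [sum_const, nsmul_eq_mul]
  have hlen := (mem_words.1 hw).2
  cases w with
  | nil =>
    subst hlen
    have : (nextLetters d []).card = d + 3 := by simp [nextLetters]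
    rw [this]
    simp only [weight, List.length_nil]
    push_cast
    field_simp
  | cons b w =>
    subst hlen
    have : (nextLetters d (b :: w)).card = d + 2 := by
      have h : nextLetters d (b :: w) = univ.erase b := by
        ext a; simp [nextLetters]
      rw [h, card_erase_of_mem (mem_univ _)]; simp
    rw [this]
    simp only [weight, List.length_cons]
    push_cast
    field_simp
    ring

lemma weight_nonneg (j : ℕ) : 0 ≤ weight d j := by
  cases j <;> simp only [weight] <;> positivity

lemma weight_total (j : ℕ) : ∑ _w ∈ words d j, weight d j = 1 := by
  induction j with
  | zero => simp [words, weight]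
  | succ j ih =>
    rw [sum_words_succ, ← ih]
    exact sum_congr rfl fun w hw => weight_children hw

lemma weight_le (j : ℕ) : weight d j ≤ (1 / 2) ^ j := by
  cases j with
  | zero => simp [weight]
  | succ j =>
    simp only [weight, one_div, inv_pow]
    have hd : (0 : ℝ) ≤ d := Nat.cast_nonneg d
    refine inv_anti₀ (by positivity) ?_
    rw [pow_succ']
    have : (2 : ℝ) ^ j ≤ (d + 2) ^ j := by gcongr; linarith
    have h2 : (2 : ℝ) ≤ d + 3 := by linarith
    exact mul_le_mul h2 this (by positivity) (by positivity)

/-- Truncations of the geometric series whose sum is the resistance from a vertex of the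
`(d + 3)`-regular tree to infinity. -/
lemma sum_weight_le (l : ℕ) :
    ∑ j ∈ range l, weight d (j + 1) ≤ ((d : ℝ) + 2) / ((d + 3) * (d + 1)) := by
  have h : ∑ j ∈ range l, weight d (j + 1) =
      ((d : ℝ) + 2) / ((d + 3) * (d + 1)) * (1 - 1 / (d + 2) ^ l) := by
    induction l with
    | zero => simp
    | succ l ih =>
      rw [sum_range_succ, ih]
      simp only [weight]
      field_simp
      ring
  rw [h]
  have h1 : (0 : ℝ) ≤ 1 / ((d : ℝ) + 2) ^ l := by positivity
  have h2 : (0 : ℝ) ≤ ((d : ℝ) + 2) / ((d + 3) * (d + 1)) := by positivity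
  nlinarith [mul_nonneg h1 h2]

/-- Finite groups generated by involutions without short relations: let the
letter `a` act on the reduced words of length at most `l` by deleting a leading `a`, or else
by prepending `a` when there is room. A reduced word applied to the empty word then returns
itself, so distinct reduced words give distinct permutations. -/
lemma exists_involutions (d l : ℕ) : ∃ (P : Type) (_ : Group P) (_ : Fintype P)
    (s : Fin (d + 3) → P), (∀ a, s a * s a = 1) ∧
      ∀ w w' : List (Fin (d + 3)), w.IsChain (· ≠ ·) → w'.IsChain (· ≠ ·) → w.length ≤ l →
        w'.length ≤ l → (w.map s).prod = (w'.map s).prod → w = w' := by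
  let X : Type := {w : List (Fin (d + 3)) // w.IsChain (· ≠ ·) ∧ w.length ≤ l}
  have : Finite X :=
    ((List.finite_length_le (Fin (d + 3)) l).subset (fun w hw => hw.2)).to_subtype
  let t : Fin (d + 3) → List (Fin (d + 3)) → List (Fin (d + 3)) := fun a w =>
    if w.head? = some a then w.tail else if w.length < l then a :: w else w
  have ht : ∀ a w, (w.IsChain (· ≠ ·) ∧ w.length ≤ l) →
      ((t a w).IsChain (· ≠ ·) ∧ (t a w).length ≤ l) ∧ t a (t a w) = w := by
    rintro a w ⟨h1, h2⟩
    simp only [t]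
    by_cases h : w.head? = some a
    · cases w with
      | nil => simp at h
      | cons b w =>
        simp only [List.head?_cons, Option.some.injEq] at h
        subst h
        rw [List.isChain_cons] at h1
        simp only [List.length_cons] at h2
        have h3 : w.head? ≠ some b := fun h => h1.1 b h rfl
        have h4 : w.length < l := by omega
        simp [h3, h4, h1.2]
        omega
    · by_cases h' : w.length < l
      · simp only [h, h', if_true, if_false, List.head?_cons, List.tail_cons, and_true]
        refine ⟨List.isChain_cons.2 ⟨?_, h1⟩, by simpa using h'⟩
        rintro b hb rfl
        exact h hb
      · simp [h, h', h1, h2]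
  let s : Fin (d + 3) → Equiv.Perm X := fun a =>
    { toFun := fun w => ⟨t a w.1, (ht a w.1 w.2).1⟩
      invFun := fun w => ⟨t a w.1, (ht a w.1 w.2).1⟩
      left_inv := fun w => Subtype.ext (ht a w.1 w.2).2
      right_inv := fun w => Subtype.ext (ht a w.1 w.2).2 }
  let o : X := ⟨[], by simp⟩
  have ho : ∀ w : List (Fin (d + 3)), w.IsChain (· ≠ ·) → w.length ≤ l →
      ((w.map s).prod o).1 = w := by
    intro w
    induction w with
    | nil => intro _ _; rfl
    | cons a w ih =>
      intro h1 h2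
      rw [List.isChain_cons] at h1
      simp only [List.length_cons] at h2
      have := ih h1.2 (by omega)
      rw [List.map_cons, List.prod_cons, Equiv.Perm.mul_apply]
      change t a ((w.map s).prod o).1 = _
      rw [this]
      have h3 : w.head? ≠ some a := fun h => h1.1 a h rfl
      simp only [t, h3, if_false]
      rw [if_pos (by omega)]
  refine ⟨Equiv.Perm X, inferInstance, Fintype.ofFinite _, s, fun a => ?_, ?_⟩
  · ext1 w
    exact Subtype.ext (ht a w.1 w.2).2
  · intro w w' h h' hl hl' he
    rw [← ho w h hl, ← ho w' h' hl', he]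

end Words

/-! ### The network -/

section Network
variable {d k l : ℕ} {P : Type} [Group P] [Fintype P]

/-- The vertices of the `(d + 3)`-regular part: two copies (the `Bool`) of `P × ℤ/(k + 1)`. -/
abbrev Site (P : Type) (k : ℕ) : Type := (P × Fin (k + 1)) × Bool

/-- All vertices: the root `none`, the regular part, and pendant neighbours of the root. -/
abbrev Vtx (P : Type) (k : ℕ) : Type := Option (Site P k ⊕ (P × Bool))

/-- All edges: `d + 3` of them at each vertex of the first copy of `P × ℤ/(k + 1)`, then one
from each sink to the root, then one from each pendant vertex to the root. -/
abbrev Edg (d : ℕ) (P : Type) (k : ℕ) : Type := ((P × Fin (k + 1)) × Fin (d + 3)) ⊕ (P ⊕ P × Bool)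

/-- The neighbour of `v` along the edge of colour `a`. Only colour `0` moves the
`ℤ/(k + 1)`-coordinate: down from the first copy, up from the second. -/
def nb (s : Fin (d + 3) → P) (a : Fin (d + 3)) (v : Site P k) : Site P k :=
  ((s a * v.1.1, if a = 0 then (if v.2 then v.1.2 + 1 else v.1.2 - 1) else v.1.2), !v.2)

/-- The rooted network. The regular part is bipartite and regular of degree `d + 3`; its
sinks are the vertices `((g, 0), false)`. -/
def network (s : Fin (d + 3) → P) (k : ℕ) : Multigraph (Vtx P k) where
  E := Edg d P k
  fst := Sum.elim (fun e => some (.inl (e.1, false)))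
    (Sum.elim (fun g => some (.inl ((g, 0), false))) fun q => some (.inr q))
  snd := Sum.elim (fun e => some (.inl (nb s e.2 (e.1, false)))) fun _ => none

/-- The net flow out of `u` in the network. -/
noncomputable def outflow (s : Fin (d + 3) → P) (u : Vtx P k) : (Edg d P k → ℝ) →ₗ[ℝ] ℝ :=
  netLin (network s k) u

/-- The edge of colour `a` at `v`, indexed by its end in the first copy. -/
def edgeOf (s : Fin (d + 3) → P) (v : Site P k) (a : Fin (d + 3)) :
    (P × Fin (k + 1)) × Fin (d + 3) :=
  (if v.2 then (nb s a v).1 else v.1, a)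

/-- A unit current along the edge of colour `a`, out of `v`. -/
noncomputable def cur (s : Fin (d + 3) → P) (v : Site P k) (a : Fin (d + 3)) : Edg d P k → ℝ :=
  Pi.single (.inl (edgeOf s v a)) (if v.2 then -1 else 1)

/-- The end point of the walk from `v` that reads `w` from right to left. -/
def walkEnd (s : Fin (d + 3) → P) (v : Site P k) : List (Fin (d + 3)) → Site P k
  | [] => v
  | a :: w => nb s a (walkEnd s v w)

/-- The indicator of a vertex. -/
noncomputable def ind (u x : Vtx P k) : ℝ := if u = x then 1 else 0

variable {s : Fin (d + 3) → P}

lemma outflow_single (u : Vtx P k) (e : Edg d P k) (c : ℝ) :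
    outflow s u (Pi.single e c) = c * (ind u ((network s k).fst e) - ind u ((network s k).snd e)) := by
  exact @netLin_single (Vtx P k) _ _ (network s k)
    (inferInstance : DecidableEq (Edg d P k)) u e c

lemma nb_nb (hs : ∀ a, s a * s a = 1) (a : Fin (d + 3)) (v : Site P k) :
    nb s a (nb s a v) = v := by
  obtain ⟨⟨g, i⟩, b⟩ := v
  simp only [nb, ← mul_assoc, hs, one_mul, Bool.not_not]
  by_cases h : a = 0 <;> cases b <;> simp [h]

lemma outflow_cur (hs : ∀ a, s a * s a = 1) (u : Vtx P k) (v : Site P k) (a : Fin (d + 3)) :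
    outflow s u (cur s v a) = ind u (some (.inl v)) - ind u (some (.inl (nb s a v))) := by
  rw [cur, outflow_single]
  obtain ⟨x, b⟩ := v
  cases b with
  | false => simp [network, edgeOf]
  | true =>
    have h : ((nb s a (x, true)).1, false) = nb s a (x, true) := rfl
    simp only [network, edgeOf, Sum.elim_inl, if_true, h, nb_nb hs]
    ring

lemma edgeOf_inj (hs : ∀ a, s a * s a = 1) {v v' : Site P k} {a a' : Fin (d + 3)}
    (h : edgeOf s v a = edgeOf s v' a') : a = a' ∧ (v = v' ∨ v = nb s a v') := by
  simp only [edgeOf, Prod.mk.injEq] at h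
  obtain ⟨h, rfl⟩ := h
  refine ⟨rfl, ?_⟩
  obtain ⟨x, b⟩ := v
  obtain ⟨x', b'⟩ := v'
  cases b <;> cases b' <;> simp only [if_true, Bool.false_eq_true, if_false] at h
  · left; rw [h]
  · right; exact Prod.ext h rfl
  · right
    rw [← nb_nb hs a (x, true)]
    congr 1
    exact Prod.ext h rfl
  · left
    rw [← nb_nb hs a (x, true), ← nb_nb hs a (x', true)]
    congr 1
    exact Prod.ext h rfl

lemma walkEnd_group (v : Site P k) (w : List (Fin (d + 3))) :
    (walkEnd s v w).1.1 = (w.map s).prod * v.1.1 := by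
  induction w with
  | nil => simp [walkEnd]
  | cons a w ih => simp [walkEnd, nb, ih, mul_assoc]

/-- Distinct reduced words of length at most `l` have distinct values, so that balls of
radius `l` in the network are trees. -/
def Free (s : Fin (d + 3) → P) (l : ℕ) : Prop :=
  ∀ w w' : List (Fin (d + 3)), w.IsChain (· ≠ ·) → w'.IsChain (· ≠ ·) → w.length ≤ l →
    w'.length ≤ l → (w.map s).prod = (w'.map s).prod → w = w'

lemma walkEnd_inj (hf : Free s l) (v : Site P k) {w w' : List (Fin (d + 3))}
    (hw : w.IsChain (· ≠ ·)) (hw' : w'.IsChain (· ≠ ·)) (hl : w.length ≤ l) (hl' : w'.length ≤ l)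
    (h : walkEnd s v w = walkEnd s v w') : w = w' := by
  refine hf w w' hw hw' hl hl' ?_
  have := congrArg (fun x => x.1.1) h
  simpa only [walkEnd_group, mul_left_inj] using this

/-- The edges traversed last by distinct nonempty reduced words are distinct. -/
lemma lastEdge_inj (hs : ∀ a, s a * s a = 1) (hf : Free s l) (v : Site P k)
    {w w' : List (Fin (d + 3))} {a a' : Fin (d + 3)}
    (hw : (a :: w).IsChain (· ≠ ·)) (hw' : (a' :: w').IsChain (· ≠ ·)) (hl : w.length < l)
    (hl' : w'.length < l) (h : edgeOf s (walkEnd s v w) a = edgeOf s (walkEnd s v w') a') :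
    a = a' ∧ w = w' := by
  obtain ⟨rfl, hend⟩ := edgeOf_inj hs h
  refine ⟨rfl, ?_⟩
  have h1 := (List.isChain_cons.1 hw)
  have h1' := (List.isChain_cons.1 hw')
  rcases hend with hend | hend
  · exact walkEnd_inj hf v h1.2 h1'.2 hl.le hl'.le hend
  · -- otherwise `w` would be the word `a :: w'`, and then `a :: w` would not be reduced
    have := walkEnd_inj (w' := a :: w') hf v h1.2 hw' hl.le hl' hend
    subst this
    exact absurd rfl (h1.1 a rfl)

/-- The unit flow that spreads evenly through the tree around `v`, up to distance `l`. -/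
lemma spread (hs : ∀ a, s a * s a = 1) (hf : Free s l) (v : Site P k) :
    ∃ f : Edg d P k → ℝ,
      (∀ u, outflow s u f = ind u (some (.inl v)) -
        ∑ w ∈ words d l, weight d l * ind u (some (.inl (walkEnd s v w)))) ∧
      ∑ e, f e ^ 2 ≤ ((d : ℝ) + 2) / ((d + 3) * (d + 1)) ∧ ∑ e, |f e| ≤ l := by
  let I : Finset (Σ _ : ℕ, Σ _ : List (Fin (d + 3)), Fin (d + 3)) :=
    (range l).sigma fun j => (words d j).sigma fun w => nextLetters d w
  let e : (Σ _ : ℕ, Σ _ : List (Fin (d + 3)), Fin (d + 3)) → Edg d P k := fun i =>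
    .inl (edgeOf s (walkEnd s v i.2.1) i.2.2)
  let y : (Σ _ : ℕ, Σ _ : List (Fin (d + 3)), Fin (d + 3)) → ℝ := fun i =>
    weight d (i.1 + 1) * (if (walkEnd s v i.2.1).2 then -1 else 1)
  have hsum : ∀ F : ℕ → List (Fin (d + 3)) → Fin (d + 3) → ℝ,
      ∑ i ∈ I, F i.1 i.2.1 i.2.2 =
        ∑ j ∈ range l, ∑ w ∈ words d j, ∑ a ∈ nextLetters d w, F j w a := by
    intro F
    simp only [I, sum_sigma]
  have hone : ∀ j, ∑ w ∈ words d j, ∑ a ∈ nextLetters d w, weight d (j + 1) = 1 := by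
    intro j
    rw [← weight_total (d := d) j]
    exact sum_congr rfl fun w hw => weight_children hw
  have hinj : Set.InjOn e I := by
    rintro ⟨j, w, a⟩ hi ⟨j', w', a'⟩ hi' h
    simp only [I, coe_sigma, Set.mem_sigma_iff, mem_coe, mem_range, mem_words] at hi hi'
    obtain ⟨hj, ⟨hc, hlen⟩, ha⟩ := hi
    obtain ⟨hj', ⟨hc', hlen'⟩, ha'⟩ := hi'
    obtain ⟨rfl, rfl⟩ := lastEdge_inj hs hf v (cons_chain hc ha) (cons_chain hc' ha')
      (by omega) (by omega) (Sum.inl_injective h)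
    obtain rfl : j = j' := by omega
    rfl
  have habs : ∀ i, |y i| = weight d (i.1 + 1) := by
    intro i
    simp only [y, abs_mul, abs_of_nonneg (weight_nonneg _)]
    split_ifs <;> simp
  refine ⟨∑ i ∈ I, Pi.single (e i) (y i), ?_, ?_, ?_⟩
  · intro u
    have hcur : ∀ i, outflow s u (Pi.single (e i) (y i)) = weight d (i.1 + 1) *
        (ind u (some (.inl (walkEnd s v i.2.1))) -
          ind u (some (.inl (walkEnd s v (i.2.2 :: i.2.1))))) := by
      intro i
      rw [walkEnd, ← outflow_cur hs, ← smul_eq_mul, ← map_smul, cur, ← Pi.single_smul, smul_eq_mul]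
    rw [map_sum, sum_congr rfl fun i _ => hcur i,
      hsum fun j w a => weight d (j + 1) *
        (ind u (some (.inl (walkEnd s v w))) - ind u (some (.inl (walkEnd s v (a :: w)))))]
    -- the current into each level leaves it evenly, so the divergences telescope
    let D : ℕ → ℝ := fun j => ∑ w ∈ words d j, weight d j * ind u (some (.inl (walkEnd s v w)))
    have hstep : ∀ j ∈ range l, ∑ w ∈ words d j, ∑ a ∈ nextLetters d w, weight d (j + 1) *
        (ind u (some (.inl (walkEnd s v w))) - ind u (some (.inl (walkEnd s v (a :: w))))) =
        D j - D (j + 1) := by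
      intro j _
      simp only [D]
      rw [sum_words_succ, ← sum_sub_distrib]
      refine sum_congr rfl fun w hw => ?_
      simp only [mul_sub, sum_sub_distrib]
      rw [← sum_mul, weight_children hw]
    rw [sum_congr rfl hstep, sum_range_sub']
    simp [D, words, weight, walkEnd]
  · rw [energy_disjoint I e hinj y]
    refine le_of_eq_of_le ?_ (sum_weight_le (d := d) l)
    rw [sum_congr rfl fun i _ => (sq_abs (y i)).symm]
    simp only [habs]
    rw [hsum fun j _ _ => weight d (j + 1) ^ 2]
    refine sum_congr rfl fun j _ => ?_
    simp only [sq, ← sum_mul, hone, one_mul]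
  · refine (sum_abs_le _ _).trans ?_
    simp only [sum_abs_single, habs]
    rw [hsum fun j _ _ => weight d (j + 1)]
    simp only [hone]
    simp

/-! ### Routing to the sinks along cycles -/

/-- The vertices joined directly to the root. -/
def IsSink (v : Site P k) : Prop := v.1.2 = 0 ∧ v.2 = false

/-- The colour used to leave `v` when routing: the colours `0` and `1` alternate. -/
def routeColour (d : ℕ) (v : Site P k) : Fin (d + 3) := if v.2 then 1 else 0

/-- The edge by which `v` is left: to the root from a sink, along the cycle otherwise. -/
noncomputable def routeEdge (s : Fin (d + 3) → P) (v : Site P k) : Edg d P k :=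
  if IsSink v then .inr (.inl v.1.1) else .inl (edgeOf s v (routeColour d v))

/-- The unit current through `routeEdge s v`, out of `v`. -/
noncomputable def routeStep (s : Fin (d + 3) → P) (v : Site P k) : Edg d P k → ℝ :=
  Pi.single (routeEdge s v) (if v.2 then -1 else 1)

/-- The route from `v` towards the root, cut off after `t` steps. -/
noncomputable def route (s : Fin (d + 3) → P) : ℕ → Site P k → Edg d P k → ℝ
  | 0, _ => 0
  | t + 1, v => routeStep s v +
      if IsSink v then 0 else route s t (nb s (routeColour d v) v)

lemma routeColour_inj {v v' : Site P k} (h : routeColour d v = routeColour d v') : v.2 = v'.2 := by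
  unfold routeColour at h
  cases hv : v.2 <;> cases hv' : v'.2 <;> simp_all

lemma routeEdge_inj (hs : ∀ a, s a * s a = 1) : Function.Injective (routeEdge (k := k) s) := by
  intro v v' h
  unfold routeEdge at h
  split_ifs at h with h1 h2 h2
  · exact Prod.ext (Prod.ext (by simpa using h) (h1.1.trans h2.1.symm)) (h1.2.trans h2.2.symm)
  · obtain ⟨hc, h | h⟩ := edgeOf_inj hs (Sum.inl_injective h)
    · exact h
    · have hb := routeColour_inj hc
      rw [h] at hb
      simp [nb] at hb

lemma next_bijective (hs : ∀ a, s a * s a = 1) :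
    Function.Bijective fun v : Site P k => nb s (routeColour d v) v := by
  refine Finite.injective_iff_bijective.1 fun v v' h => ?_
  have hb : v.2 = v'.2 := by
    have := congrArg Prod.snd h
    simpa [nb] using this
  have hc : routeColour d v = routeColour d v' := by simp [routeColour, hb]
  simp only [hc] at h
  rw [← nb_nb hs (routeColour d v') v, h, nb_nb hs]

/-- The route from `v` reaches the root once `t` exceeds the number of steps from `v` to the
sink on its cycle, which is `2 * i` or `2 * i + 1` at height `i`. -/
lemma outflow_route (hs : ∀ a, s a * s a = 1) (u : Vtx P k) (t : ℕ) (v : Site P k)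
    (ht : 2 * v.1.2.val + (if v.2 then 1 else 0) < t) :
    outflow s u (route s t v) = ind u (some (.inl v)) - ind u none := by
  induction t generalizing v with
  | zero => omega
  | succ t ih =>
    rw [route, map_add, routeStep, routeEdge]
    obtain ⟨⟨g, i⟩, b⟩ := v
    by_cases h : IsSink ((g, i), b)
    · obtain ⟨rfl, rfl⟩ : i = 0 ∧ b = false := h
      have h' : IsSink (((g, 0), false) : Site P k) := ⟨rfl, rfl⟩
      rw [if_pos h', if_pos h', map_zero, outflow_single]
      simp [network]
    · rw [if_neg h, if_neg h]
      change outflow s u (cur s _ _) + _ = _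
      rw [outflow_cur hs, ih]
      · ring
      · -- the distance to the sink drops by one
        cases b with
        | true =>
          simp [nb, routeColour] at ht ⊢
          omega
        | false =>
          have hi : i ≠ 0 := fun h' => h ⟨h', rfl⟩
          have hv := Fin.val_sub_one_of_ne_zero hi
          have hi' : i.val ≠ 0 := fun h' => hi (Fin.ext h')
          simp [nb, routeColour, hv] at ht ⊢
          omega

lemma sum_abs_route (t : ℕ) (v : Site P k) : ∑ e, |route s t v e| ≤ t := by
  induction t generalizing v with
  | zero => simp [route]
  | succ t ih =>
    have h1 : ∀ e, |route s (t + 1) v e| ≤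
        |routeStep s v e| + |route s t (nb s (routeColour d v) v) e| := by
      intro e
      rw [route, Pi.add_apply]
      refine (abs_add_le _ _).trans ?_
      refine add_le_add le_rfl ?_
      split_ifs <;> simp
    refine (sum_le_sum fun e _ => h1 e).trans ?_
    rw [sum_add_distrib, routeStep, sum_abs_single]
    push_cast
    have h2 := ih (nb s (routeColour d v) v)
    have h3 : |(if v.2 then (-1 : ℝ) else 1)| = 1 := by split_ifs <;> simp
    linarith

/-- No edge is used by more than `t` of the routes, since leaving a vertex is a
permutation. -/
lemma sum_abs_route_edge (hs : ∀ a, s a * s a = 1) (t : ℕ) (e : Edg d P k) :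
    ∑ v, |route s t v e| ≤ t := by
  induction t with
  | zero => simp [route]
  | succ t ih =>
    have h1 : ∀ v, |route s (t + 1) v e| ≤
        (if routeEdge s v = e then 1 else 0) + |route s t (nb s (routeColour d v) v) e| := by
      intro v
      rw [route, Pi.add_apply]
      refine (abs_add_le _ _).trans ?_
      refine add_le_add ?_ ?_
      · rw [routeStep]
        by_cases h : routeEdge s v = e
        · subst h
          rw [Pi.single_eq_same, if_pos rfl]
          split_ifs <;> simp
        · rw [Pi.single_eq_of_ne (Ne.symm h)]
          simp [h]
      · split_ifs <;> simp
    refine (sum_le_sum fun v _ => h1 v).trans ?_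
    rw [sum_add_distrib, (next_bijective hs).sum_comp fun v => |route s t v e|, sum_boole]
    have h2 : #{v | routeEdge s v = e} ≤ 1 := by
      refine card_le_one.2 fun v hv v' hv' => routeEdge_inj hs ?_
      rw [(mem_filter.1 hv).2, (mem_filter.1 hv').2]
    have h3 : ((#{v | routeEdge s v = e} : ℕ) : ℝ) ≤ 1 := by exact_mod_cast h2
    push_cast
    linarith

/-- Spreading over the sphere of radius `l` and then routing to the root costs little more
than the resistance of the infinite tree: no edge gets more than a
`weight d l * (2 * k + 2)` share of the routed current. -/
lemma site_flow (hs : ∀ a, s a * s a = 1) (hf : Free s l) (v : Site P k) :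
    ∃ f : Edg d P k → ℝ, (∀ u, outflow s u f = ind u (some (.inl v)) - ind u none) ∧
      ∑ e, f e ^ 2 ≤ ((d : ℝ) + 2) / ((d + 3) * (d + 1)) +
        weight d l * (2 * k + 2) * (2 * l + (2 * k + 2)) := by
  obtain ⟨f, hdiv, hen, habs⟩ := spread hs hf v
  let g : Edg d P k → ℝ :=
    ∑ w ∈ words d l, weight d l • route s (2 * k + 2) (walkEnd s v w)
  have hg : ∀ e w, |(weight d l • route s (2 * k + 2) (walkEnd s v w)) e| =
      weight d l * |route s (2 * k + 2) (walkEnd s v w) e| := by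
    intro e w
    rw [Pi.smul_apply, smul_eq_mul, abs_mul, abs_of_nonneg (weight_nonneg _)]
  have hc : ((2 * k + 2 : ℕ) : ℝ) = 2 * k + 2 := by push_cast; ring
  refine ⟨f + g, fun u => ?_, ?_⟩
  · rw [map_add, hdiv, map_sum]
    have h : ∀ w ∈ words d l,
        outflow s u (weight d l • route s (2 * k + 2) (walkEnd s v w)) =
          weight d l * ind u (some (.inl (walkEnd s v w))) - weight d l * ind u none := by
      intro w _
      rw [map_smul, outflow_route hs, smul_eq_mul, mul_sub]
      have := (walkEnd s v w).1.2.isLt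
      split_ifs <;> omega
    rw [sum_congr rfl h, sum_sub_distrib, ← sum_mul (f := fun _ => weight d l), weight_total]
    ring
  · refine (energy_add_le f g (M := weight d l * (2 * k + 2)) (A := l) (B := 2 * k + 2)
      ?_ habs ?_ ?_).trans (add_le_add hen le_rfl)
    · intro e
      simp only [g, Finset.sum_apply]
      refine (abs_sum_le_sum_abs _ _).trans ?_
      simp only [hg]
      rw [← mul_sum]
      refine mul_le_mul_of_nonneg_left ?_ (weight_nonneg _)
      rw [← hc]
      refine le_trans ?_ (sum_abs_route_edge hs (2 * k + 2) e)
      rw [← sum_image (g := walkEnd s v) (f := fun x => |route s (2 * k + 2) x e|)]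
      · exact sum_le_sum_of_subset_of_nonneg (subset_univ _) fun _ _ _ => abs_nonneg _
      · intro w hw w' hw' h
        have hw := mem_words.1 hw
        have hw' := mem_words.1 hw'
        exact walkEnd_inj hf v hw.1 hw'.1 hw.2.le hw'.2.le h
    · refine (sum_abs_le _ _).trans ?_
      simp only [hg, ← mul_sum]
      rw [← one_mul ((2 : ℝ) * k + 2), ← weight_total (d := d) l, sum_mul, mul_sum]
      refine sum_le_sum fun w _ => mul_le_mul_of_nonneg_left ?_ (weight_nonneg _)
      rw [← hc]
      exact sum_abs_route _ _
    · have := weight_nonneg (d := d) l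
      positivity

end Network

/-! ### Choice of parameters -/

open Filter Topology in
lemma exists_radius (k : ℕ) {δ : ℝ} (hδ : 0 < δ) :
    ∃ l : ℕ, (1 / 2 : ℝ) ^ l * (2 * k + 2) * (2 * l + (2 * k + 2)) ≤ δ := by
  have h1 := tendsto_self_mul_const_pow_of_lt_one (r := 1 / 2) (by norm_num) (by norm_num)
  have h2 := tendsto_pow_atTop_nhds_zero_of_lt_one (r := (1 / 2 : ℝ)) (by norm_num) (by norm_num)
  have h3 : Tendsto (fun l : ℕ => (1 / 2 : ℝ) ^ l * (2 * k + 2) * (2 * l + (2 * k + 2))) atTop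
      (𝓝 0) := by
    have := (h1.const_mul (2 * (2 * (k : ℝ) + 2))).add (h2.const_mul ((2 * (k : ℝ) + 2) ^ 2))
    simp only [mul_zero, add_zero] at this
    refine this.congr fun l => ?_
    ring
  exact (h3.eventually (ge_mem_nhds hδ)).exists

/-- Arbitrarily large sizes at which both minima are nearly as small as claimed. The sinks have
density `1 / (2k + 2)` in the regular part. Each pendant vertex brings `(d + 3) / 2` to the
edge budget and uses `1`, so two of them per sink pay for the edges at the sinks. -/
lemma exists_good (d N : ℕ) {ε : ℝ} (hε : 0 < ε) : ∃ n ≥ N,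
    bFun (n + 1) ((d : ℝ) + 3) ≤
      ENNReal.ofReal (((d : ℝ) + 2) / ((d + 3) * (d + 1)) + ε) ∧
    aFun (n + 1 + 1) ((d : ℝ) + 3) ≤
      ENNReal.ofReal (2 * (((d : ℝ) + 2) / ((d + 3) * (d + 1)) + ε)) := by
  obtain ⟨k, hk⟩ : ∃ k : ℕ, max (N : ℝ) (2 / ε) ≤ k := exists_nat_ge _
  have hkN : N ≤ k := by exact_mod_cast (le_max_left _ _).trans hk
  have hkε : 2 ≤ k * ε := by
    have := (le_max_right _ _).trans hk
    rwa [div_le_iff₀ hε] at this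
  obtain ⟨l, hl⟩ := exists_radius k (half_pos hε)
  obtain ⟨P, _, _, s, hs, hfree⟩ := exists_involutions d l
  set β : ℝ := ((d : ℝ) + 2) / ((d + 3) * (d + 1)) with hβ
  have hβ0 : 0 ≤ β := by positivity
  have hsite : ∀ v : Site P k, ∃ f : Edg d P k → ℝ,
      (∀ u, outflow s u f = ind u (some (.inl v)) - ind u none) ∧
        ∑ e, f e ^ 2 ≤ β + ε / 2 := by
    intro v
    obtain ⟨f, h1, h2⟩ := site_flow (l := l) hs hfree v
    refine ⟨f, h1, h2.trans (add_le_add le_rfl (le_trans ?_ hl))⟩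
    gcongr
    exact weight_le l
  choose F hF hFE using hsite
  let f : Vtx P k → Edg d P k → ℝ := fun x => match x with
    | none => 0
    | some (.inl v) => F v
    | some (.inr q) => Pi.single (.inr (.inr q)) 1
  set p : ℕ := Fintype.card P with hp
  have hp1 : 1 ≤ p := Fintype.card_pos
  obtain ⟨n, hn⟩ : ∃ n : ℕ, n + 1 = p * (k + 1) * 2 + p * 2 := by
    refine ⟨p * (k + 1) * 2 + p * 2 - 1, ?_⟩
    omega
  have hnR : ((n + 1 : ℕ) : ℝ) = p * (k + 1) * 2 + p * 2 := by rw [hn]; push_cast; ring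
  have hp0 : (1 : ℝ) ≤ p := by exact_mod_cast hp1
  refine ⟨n, ?_, ?_⟩
  · have : 1 * (k + 1) ≤ p * (k + 1) := Nat.mul_le_mul_right _ hp1
    omega
  refine bFun_aFun_le (Nat.succ_pos n) ?_ (network s k) none f ?_ _ _ (by positivity)
    (by positivity) ?_ ?_
  · simp [← hp, hn]
  · intro x u
    change outflow s u (f x) = ind u x - ind u none
    rcases x with _ | v | q
    · simp [f]
    · exact hF v u
    · simp only [f]
      rw [outflow_single]
      simp [network]
  · have : (network s k).edgeCount = p * (k + 1) * (d + 3) + (p + p * 2) := by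
      change Fintype.card (Edg d P k) = _
      simp [← hp]
    rw [this, hnR]
    push_cast
    have : (0 : ℝ) ≤ d * p := by positivity
    nlinarith
  · change ∑ x, ∑ e : Edg d P k, f x e ^ 2 ≤ _
    have h0 : ∑ e : Edg d P k, f none e ^ 2 = 0 := by simp [f]
    have h1 : ∑ v : Site P k, ∑ e : Edg d P k, f (some (.inl v)) e ^ 2 ≤
        p * (k + 1) * 2 * (β + ε / 2) := by
      refine (sum_le_sum fun v _ => hFE v).trans (le_of_eq ?_)
      simp [← hp]
      ring
    have h2 : ∑ q : P × Bool, ∑ e : Edg d P k, f (some (.inr q)) e ^ 2 = p * 2 := by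
      simp only [f, sum_sq_single]
      simp [← hp]
    rw [Fintype.sum_option, h0, Fintype.sum_sum_type, h2, hnR]
    have h3 : p * 2 ≤ p * (k * ε) := by gcongr
    have h4 : 0 ≤ p * β := by positivity
    have h5 : 0 ≤ p * ε := by positivity
    nlinarith

end RegularTree

/-- **Corollary (random regular graph bound).** For every integer `α ≥ 3`,
`b(α) ≤ (α-1)/(α(α-2))` and `a(α) ≤ 2(α-1)/(α(α-2))`. -/
theorem stmt10 (α : ℕ) (hα : 3 ≤ α) :
    (∀ L : ℝ≥0∞,
        Filter.Tendsto (fun n : ℕ => bFun (n + 1) (α : ℝ)) Filter.atTop (nhds L) →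
        L ≤ ENNReal.ofReal (((α : ℝ) - 1) / ((α : ℝ) * ((α : ℝ) - 2)))) ∧
    (∀ L : ℝ≥0∞,
        Filter.Tendsto (fun n : ℕ => aFun (n + 1) (α : ℝ)) Filter.atTop (nhds L) →
        L ≤ ENNReal.ofReal (2 * ((α : ℝ) - 1) / ((α : ℝ) * ((α : ℝ) - 2)))) := by
  obtain ⟨d, rfl⟩ := Nat.exists_eq_add_of_le' hα
  have hd : (((d + 3 : ℕ) : ℝ) - 1) / (((d + 3 : ℕ) : ℝ) * (((d + 3 : ℕ) : ℝ) - 2)) =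
      ((d : ℝ) + 2) / ((d + 3) * (d + 1)) := by
    push_cast
    ring_nf
  have hβ : (0 : ℝ) ≤ ((d : ℝ) + 2) / ((d + 3) * (d + 1)) := by positivity
  have hα' : ((d + 3 : ℕ) : ℝ) = d + 3 := by push_cast; ring
  -- a limit is bounded by any bound that holds at arbitrarily large sizes
  constructor
  · intro L hL
    rw [hd]
    refine ENNReal.le_of_forall_pos_le_add fun ε hε _ => ?_
    rw [← ENNReal.ofReal_coe_nnreal, ← ENNReal.ofReal_add hβ ε.coe_nonneg]
    refine le_of_tendsto_of_frequently hL (Filter.frequently_atTop.2 fun N => ?_)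
    obtain ⟨n, hn, hB, _⟩ := RegularTree.exists_good d N (ε := ε) (by exact_mod_cast hε)
    exact ⟨n, hn, by rw [hα']; exact hB⟩
  · intro L hL
    rw [mul_div_assoc, hd]
    refine ENNReal.le_of_forall_pos_le_add fun ε hε _ => ?_
    rw [← ENNReal.ofReal_coe_nnreal, ← ENNReal.ofReal_add (by positivity) ε.coe_nonneg]
    refine le_of_tendsto_of_frequently hL (Filter.frequently_atTop.2 fun N => ?_)
    have hε' : (0 : ℝ) < ε := by exact_mod_cast hε
    obtain ⟨n, hn, _, hA⟩ := RegularTree.exists_good d N (ε := ε / 2) (by positivity)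
    refine ⟨n + 1, by omega, ?_⟩
    rw [hα']
    refine hA.trans (le_of_eq ?_)
    congr 1
    ring
end

section
/- Fix integers n < m with 2m < 9n/4, and let ℓ = 9n − 8m (note ℓ > 0). Suppose G is a connected rooted graph with n non-root vertices, m edges, and exactly k leaves, where k ≤ ℓ. Then there exists a connected rooted graph G' with n non-root vertices and m edges such that Rtot(G') ≤ Rtot(G) − (ℓ − k)/100. -/
/-!
The graph is improved step by step, until the root is a leaf or there are at least `9n - 8m`
leaves. Every step keeps the graph connected and the number of edges fixed, raises the degree of
the root, and lowers the total resistance by at least `1/100` for each leaf it creates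
(`LeafCreation.main`).

* If the root is a leaf, moving the root to its neighbour lowers the total resistance by `n - 1`,
  and this exceeds the required amount at once (`reroot`).
* If some leaf hangs at a vertex other than the root, it is reattached to the root (`step_leaf`).
  A new leaf arises only if the old neighbour had degree two, and then a unit of resistance is
  saved.
* Otherwise all leaves hang at the root. A count of darts (`exists_middle`) then shows that with
  fewer than `9n - 8m` leaves there are three consecutive non-root vertices `x₁, x₂, x₃` of degree
  two. One contracts an edge at `x₂` and reuses `x₂` as a leaf at the root (`step_contract`).

For the gain in the last step (`contract_gain`), let `p`, `q` be the currents passing through `x₂`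
in the optimal flows to `x₁` and to `x₃`, and let the optimal flow to `x₂` arrive with `b` from one
side and `1 - b` from the other. Keeping the flows to `x₁` and `x₃` saves at least
`(2b - 1)² + p² + q²`. If this is below `1/100`, then `p`, `q` are below `1/10`, so `x₁` and `x₃`
have resistance at least `0.84`; using the contracted flow to `x₂` as a flow to one of them then
saves at least `0.84 - 1 + 1/4` in total.

All comparisons are made between families of unit flows (`IsFam`): every family bounds the total
resistance from above, an optimal one attains it when it is finite (`exists_fam`), and the
existence of a family makes the graph connected (`connected_of_fam`).
-/

open scoped ENNReal

set_option linter.unusedSectionVars false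

attribute [local instance 10] Classical.propDecidable

open Multigraph

namespace LeafCreation

variable {V : Type} [Fintype V] [DecidableEq V]

/-- The indicator of the vertex `a`, as a real-valued function. -/
def ind (a w : V) : ℝ := if a = w then 1 else 0

/-- The source of a dart: the dart `(e, true)` is the edge `e` with its given orientation,
and `(e, false)` is `e` reversed. -/
def src (G : Multigraph V) (d : G.E × Bool) : V := if d.2 then G.fst d.1 else G.snd d.1

/-- The target of a dart. -/
def tgt (G : Multigraph V) (d : G.E × Bool) : V := if d.2 then G.snd d.1 else G.fst d.1

/-- The reversed dart. -/
def rev {E : Type} (d : E × Bool) : E × Bool := (d.1, !d.2)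

/-- The current of `f` along a dart. -/
def cur {E : Type} (f : E → ℝ) (d : E × Bool) : ℝ := if d.2 then f d.1 else - f d.1

/-- The entry of the signed incidence matrix of `G` at the edge `e` and the vertex `w`. -/
def inc (G : Multigraph V) (e : G.E) (w : V) : ℝ := ind (G.fst e) w - ind (G.snd e) w

@[simp] lemma src_rev (G : Multigraph V) (d : G.E × Bool) : src G (rev d) = tgt G d := by
  obtain ⟨e, b⟩ := d; cases b <;> rfl

@[simp] lemma tgt_rev (G : Multigraph V) (d : G.E × Bool) : tgt G (rev d) = src G d := by
  obtain ⟨e, b⟩ := d; cases b <;> rfl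

@[simp] lemma rev_rev {E : Type} (d : E × Bool) : rev (rev d) = d := by
  obtain ⟨e, b⟩ := d; cases b <;> rfl

@[simp] lemma rev_fst {E : Type} (d : E × Bool) : (rev d).1 = d.1 := rfl

lemma rev_ne {E : Type} (d : E × Bool) : rev d ≠ d := by
  obtain ⟨e, b⟩ := d; cases b <;> simp [rev]

lemma eq_or_eq_rev {E : Type} {d d' : E × Bool} (h : d.1 = d'.1) : d = d' ∨ d = rev d' := by
  obtain ⟨e, b⟩ := d; obtain ⟨e', b'⟩ := d'
  cases b <;> cases b' <;> simp_all [rev]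

@[simp] lemma cur_rev {E : Type} (f : E → ℝ) (d : E × Bool) : cur f (rev d) = - cur f d := by
  obtain ⟨e, b⟩ := d; cases b <;> simp [cur, rev]

lemma cur_sq {E : Type} (f : E → ℝ) (d : E × Bool) : cur f d ^ 2 = f d.1 ^ 2 := by
  obtain ⟨e, b⟩ := d; cases b <;> simp [cur]

lemma mul_inc (G : Multigraph V) (f : G.E → ℝ) (d : G.E × Bool) (w : V) :
    f d.1 * inc G d.1 w = cur f d * (ind (src G d) w - ind (tgt G d) w) := by
  obtain ⟨e, b⟩ := d; cases b <;> simp [cur, inc, src, tgt]; ring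

lemma netFlow_eq (G : Multigraph V) (f : G.E → ℝ) (w : V) :
    G.netFlow f w = ∑ e, f e * inc G e w := by
  unfold netFlow inc ind
  refine Finset.sum_congr rfl fun e _ => ?_
  split_ifs <;> ring

lemma netFlow_eq_darts (G : Multigraph V) (f : G.E → ℝ) (w : V) :
    G.netFlow f w = ∑ d with src G d = w, cur f d := by
  rw [Finset.sum_filter, Fintype.sum_prod_type]
  unfold netFlow
  refine Finset.sum_congr rfl fun e _ => ?_
  simp only [Fintype.sum_bool, src, cur]
  split_ifs <;> simp_all

lemma degree_eq_darts (G : Multigraph V) (w : V) :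
    G.degree w = (Finset.univ.filter fun d : G.E × Bool => src G d = w).card := by
  rw [Finset.card_filter, Fintype.sum_prod_type]
  unfold degree
  rw [Finset.card_filter, Finset.card_filter, ← Finset.sum_add_distrib]
  refine Finset.sum_congr rfl fun e _ => ?_
  simp only [Fintype.sum_bool, src]
  split_ifs <;> simp_all

lemma degree_pos (G : Multigraph V) (d : G.E × Bool) : 0 < G.degree (src G d) := by
  rw [degree_eq_darts, Finset.card_pos]
  exact ⟨d, by simp⟩

lemma adj_dart (G : Multigraph V) (d : G.E × Bool) : G.Adj (src G d) (tgt G d) := by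
  obtain ⟨e, b⟩ := d
  cases b
  · exact ⟨e, Or.inr ⟨rfl, rfl⟩⟩
  · exact ⟨e, Or.inl ⟨rfl, rfl⟩⟩

lemma adj_iff (G : Multigraph V) (u v : V) : G.Adj u v ↔ ∃ d, src G d = u ∧ tgt G d = v := by
  constructor
  · rintro ⟨e, h | h⟩
    · exact ⟨(e, true), h⟩
    · exact ⟨(e, false), h.2, h.1⟩
  · rintro ⟨d, rfl, rfl⟩
    exact adj_dart G d

lemma adj_symm (G : Multigraph V) : Std.Symm G.Adj := by
  constructor
  rintro u v ⟨e, h⟩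
  exact ⟨e, h.symm⟩

/-- In a connected graph, a nonempty set of vertices that no dart leaves contains every
vertex. -/
lemma mem_of_closed {G : Multigraph V} (hG : G.Connected) {S : Set V} {v : V} (hv : v ∈ S)
    (h : ∀ d, src G d ∈ S → tgt G d ∈ S) (u : V) : u ∈ S := by
  induction hG v u with
  | refl => exact hv
  | tail _ hadj ih =>
    obtain ⟨d, rfl, rfl⟩ := (adj_iff G _ _).1 hadj
    exact h d ih

lemma degree_ne_zero {G : Multigraph V} (hG : G.Connected) {ρ v : V} (hv : v ≠ ρ) :
    0 < G.degree v := by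
  by_contra h
  have h0 : G.degree v = 0 := by omega
  rw [degree_eq_darts, Finset.card_eq_zero, Finset.filter_eq_empty_iff] at h0
  have := mem_of_closed hG (S := {v}) rfl (fun d hd => absurd hd (h0 (Finset.mem_univ d))) ρ
  exact hv this.symm

lemma sum_degree (G : Multigraph V) : ∑ v, G.degree v = 2 * G.edgeCount := by
  simp_rw [degree_eq_darts]
  rw [← Finset.card_eq_sum_card_fiberwise (fun d _ => Finset.mem_coe.2 (Finset.mem_univ (src G d)))]
  simp [edgeCount, mul_comm]

lemma sum_ind (a : V) : ∑ w, ind a w = 1 := by simp [ind]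

lemma sum_netFlow (G : Multigraph V) (f : G.E → ℝ) : ∑ w, G.netFlow f w = 0 := by
  simp_rw [netFlow_eq]
  rw [Finset.sum_comm]
  simp_rw [← Finset.mul_sum, inc, Finset.sum_sub_distrib, sum_ind]
  simp

/-! ### Families of unit flows -/

/-- A family assigning to each vertex `v` a unit flow from `ρ` to `v` (a circulation when
`v = ρ`). -/
def IsFam (G : Multigraph V) (ρ : V) (F : V → G.E → ℝ) : Prop :=
  ∀ v w, G.netFlow (F v) w = ind ρ w - ind v w

/-- The energy of a current assignment. -/
def en {E : Type} [Fintype E] (f : E → ℝ) : ℝ := ∑ e, f e ^ 2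

lemma en_nonneg {E : Type} [Fintype E] (f : E → ℝ) : 0 ≤ en f :=
  Finset.sum_nonneg fun _ _ => sq_nonneg _

lemma isUnitFlow_iff (G : Multigraph V) {ρ v : V} (h : ρ ≠ v) (f : G.E → ℝ) :
    G.IsUnitFlow ρ v f ↔ ∀ w, G.netFlow f w = ind ρ w - ind v w := by
  constructor
  · rintro ⟨h1, h2⟩ w
    by_cases hw : w = ρ
    · subst hw; simp [ind, h1, h.symm]
    by_cases hw' : w = v
    · subst hw'
      -- the net currents of any assignment sum to zero, which fixes the value at the sink
      have h3 := sum_netFlow G f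
      rw [← Finset.add_sum_erase _ _ (Finset.mem_univ w),
        ← Finset.add_sum_erase _ _ (Finset.mem_erase.2 ⟨h, Finset.mem_univ ρ⟩),
        Finset.sum_eq_zero (s := (Finset.univ.erase w).erase ρ), h1] at h3
      · simp only [ind, h, if_false, if_true]; linarith
      · intro x hx
        simp only [Finset.mem_erase] at hx
        exact h2 x hx.1 hx.2.1
    · rw [h2 w hw hw']; simp [ind, Ne.symm hw, Ne.symm hw']
  · intro hf
    refine ⟨by rw [hf]; simp [ind, h.symm], fun w h1 h2 => ?_⟩
    rw [hf]; simp [ind, Ne.symm h1, Ne.symm h2]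

/-- The infimum defining a finite effective resistance is attained, because the unit flows
form a closed set in a finite-dimensional Euclidean space. -/
lemma exists_opt (G : Multigraph V) (ρ v : V) (h : G.effRes ρ v ≠ ⊤) :
    ∃ f : G.E → ℝ, (∀ w, G.netFlow f w = ind ρ w - ind v w) ∧
      G.effRes ρ v = ENNReal.ofReal (en f) := by
  by_cases hv : ρ = v
  · subst hv
    exact ⟨0, fun w => by simp [netFlow_eq], by simp [effRes, en]⟩
  let K : Set (EuclideanSpace ℝ G.E) :=
    {f | ∀ w, ∑ e, f e * inc G e w = ind ρ w - ind v w}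
  have hK : IsClosed K := by
    simp only [K, Set.ofPred_forall]
    exact isClosed_iInter fun w => isClosed_eq (by fun_prop) continuous_const
  have hne : K.Nonempty := by
    by_contra hK0
    apply h
    rw [effRes, if_neg hv, iInf_eq_top]
    rintro ⟨f, hf⟩
    refine absurd ⟨WithLp.toLp 2 f, fun w => ?_⟩ hK0
    rw [← (isUnitFlow_iff G hv f).1 hf w, netFlow_eq]
  obtain ⟨g, hg, hmin⟩ := hK.exists_infDist_eq_dist hne 0
  have hg' : ∀ w, G.netFlow (fun e => g e) w = ind ρ w - ind v w := fun w => by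
    rw [netFlow_eq]; exact hg w
  refine ⟨fun e => g e, hg', ?_⟩
  rw [effRes, if_neg hv]
  apply le_antisymm
  · exact iInf_le_of_le ⟨fun e => g e, (isUnitFlow_iff G hv _).2 hg'⟩ le_rfl
  · refine le_iInf fun f => ENNReal.ofReal_le_ofReal ?_
    have hf : WithLp.toLp 2 f.1 ∈ K := fun w => by
      rw [← (isUnitFlow_iff G hv f.1).1 f.2 w, netFlow_eq]
    have := hmin.symm.le.trans (Metric.infDist_le_dist_of_mem (x := 0) hf)
    rw [dist_zero_left, dist_zero_left, EuclideanSpace.norm_eq, EuclideanSpace.norm_eq,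
      Real.sqrt_le_sqrt_iff (by positivity)] at this
    simpa [en] using this

lemma Rtot_le (G : Multigraph V) (ρ : V) (F : V → G.E → ℝ) (hF : IsFam G ρ F) :
    G.Rtot ρ ≤ ENNReal.ofReal (∑ v, en (F v)) := by
  rw [ENNReal.ofReal_sum_of_nonneg fun v _ => en_nonneg _]
  refine Finset.sum_le_sum fun v _ => ?_
  rw [effRes]
  split_ifs with h
  · exact zero_le
  · exact iInf_le_of_le ⟨F v, (isUnitFlow_iff G h _).2 (hF v)⟩ le_rfl

lemma exists_fam (G : Multigraph V) (ρ : V) (h : G.Rtot ρ ≠ ⊤) :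
    ∃ F, IsFam G ρ F ∧ G.Rtot ρ = ENNReal.ofReal (∑ v, en (F v)) := by
  have h' : ∀ v, G.effRes ρ v ≠ ⊤ := fun v hv => h (ENNReal.sum_eq_top.2 ⟨v, Finset.mem_univ v, hv⟩)
  choose F hF hF' using fun v => exists_opt G ρ v (h' v)
  refine ⟨F, hF, ?_⟩
  rw [ENNReal.ofReal_sum_of_nonneg fun v _ => en_nonneg _]
  exact Finset.sum_congr rfl fun v _ => hF' v

/-- A graph carrying unit flows from `ρ` to every vertex is connected: the net current out of
the component of `ρ` is zero, so no sink lies outside it. -/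
lemma connected_of_fam {G : Multigraph V} {ρ : V} {F : V → G.E → ℝ} (hF : IsFam G ρ F) :
    G.Connected := by
  have key : ∀ v, Relation.ReflTransGen G.Adj ρ v := by
    intro v
    by_contra hv
    have h1 : ∑ w with Relation.ReflTransGen G.Adj ρ w, G.netFlow (F v) w = 0 := by
      simp_rw [netFlow_eq]
      rw [Finset.sum_comm]
      refine Finset.sum_eq_zero fun e _ => ?_
      rw [← Finset.mul_sum]
      have hiff : Relation.ReflTransGen G.Adj ρ (G.fst e) ↔
          Relation.ReflTransGen G.Adj ρ (G.snd e) :=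
        ⟨fun h => h.tail ⟨e, Or.inl ⟨rfl, rfl⟩⟩, fun h => h.tail ⟨e, Or.inr ⟨rfl, rfl⟩⟩⟩
      simp [inc, ind, Finset.sum_sub_distrib, hiff]
    simp_rw [hF v] at h1
    simp [ind, Finset.sum_sub_distrib, hv, Relation.ReflTransGen.refl] at h1
  intro u v
  have hs := adj_symm G
  exact (Relation.ReflTransGen.stdSymm.symm _ _ (key u)).trans (key v)

lemma Rtot_add_le {G G' : Multigraph V} {ρ ρ' : V} {F : V → G.E → ℝ} {F' : V → G'.E → ℝ}
    {g : ℝ} (hg : 0 ≤ g) (hR : G.Rtot ρ = ENNReal.ofReal (∑ v, en (F v)))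
    (hF' : IsFam G' ρ' F') (h : ∑ v, en (F' v) + g ≤ ∑ v, en (F v)) :
    G'.Rtot ρ' + ENNReal.ofReal g ≤ G.Rtot ρ := by
  refine (add_le_add (Rtot_le G' ρ' F' hF') le_rfl).trans ?_
  rw [← ENNReal.ofReal_add (Finset.sum_nonneg fun v _ => en_nonneg _) hg, hR]
  exact ENNReal.ofReal_le_ofReal h

/-! ### Redirecting edges -/

/-- The graph `G` with the edge `e` redirected so that it goes from `a` to `b`. -/
noncomputable abbrev redirect (G : Multigraph V) (e : G.E) (a b : V) : Multigraph V where
  E := G.E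
  fst := Function.update G.fst e a
  snd := Function.update G.snd e b

lemma inc_redirect_self (G : Multigraph V) (e : G.E) (a b w : V) :
    inc (redirect G e a b) e w = ind a w - ind b w := by
  simp [inc]

lemma inc_redirect_of_ne (G : Multigraph V) {e e' : G.E} (h : e' ≠ e) (a b w : V) :
    inc (redirect G e a b) e' w = inc G e' w := by
  simp [inc, h]

lemma netFlow_redirect (G : Multigraph V) (e : G.E) (a b w : V) (f : G.E → ℝ) :
    (redirect G e a b).netFlow f w =
      G.netFlow f w + f e * (ind a w - ind b w - inc G e w) := by
  rw [netFlow_eq, netFlow_eq, ← Finset.add_sum_erase _ _ (Finset.mem_univ e),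
    ← Finset.add_sum_erase (a := e) (f := fun x => f x * inc G x w) _ (Finset.mem_univ e),
    inc_redirect_self]
  have : ∑ x ∈ Finset.univ.erase e, f x * inc (redirect G e a b) x w =
      ∑ x ∈ Finset.univ.erase e, f x * inc G x w :=
    Finset.sum_congr rfl fun x hx => by rw [inc_redirect_of_ne G (Finset.ne_of_mem_erase hx)]
  rw [this]
  ring

lemma netFlow_update (G : Multigraph V) (e : G.E) (t : ℝ) (w : V) (f : G.E → ℝ) :
    G.netFlow (Function.update f e t) w = G.netFlow f w + (t - f e) * inc G e w := by
  rw [netFlow_eq, netFlow_eq, ← Finset.add_sum_erase _ _ (Finset.mem_univ e),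
    ← Finset.add_sum_erase (a := e) (f := fun x => f x * inc G x w) _ (Finset.mem_univ e)]
  have : ∑ x ∈ Finset.univ.erase e, Function.update f e t x * inc G x w =
      ∑ x ∈ Finset.univ.erase e, f x * inc G x w :=
    Finset.sum_congr rfl fun x hx => by
      rw [Function.update_of_ne (Finset.ne_of_mem_erase hx)]
  rw [this, Function.update_self]
  ring

lemma en_update {E : Type} [Fintype E] (f : E → ℝ) (e : E) (t : ℝ) :
    en (Function.update f e t) = en f + t ^ 2 - f e ^ 2 := by
  unfold en
  rw [← Finset.add_sum_erase _ _ (Finset.mem_univ e),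
    ← Finset.add_sum_erase (a := e) (f := fun x => f x ^ 2) _ (Finset.mem_univ e)]
  have : ∑ x ∈ Finset.univ.erase e, Function.update f e t x ^ 2 =
      ∑ x ∈ Finset.univ.erase e, f x ^ 2 :=
    Finset.sum_congr rfl fun x hx => by
      rw [Function.update_of_ne (Finset.ne_of_mem_erase hx)]
  rw [this, Function.update_self]
  ring

/-- The indicator of the vertex `a`, as a natural number. -/
def indN (a w : V) : ℕ := if a = w then 1 else 0

lemma degree_eq_sum (G : Multigraph V) (w : V) :
    G.degree w = ∑ e, (indN (G.fst e) w + indN (G.snd e) w) := by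
  unfold degree indN
  rw [Finset.card_filter, Finset.card_filter, Finset.sum_add_distrib]

lemma degree_redirect (G : Multigraph V) (d : G.E × Bool) (a b w : V) :
    (redirect G d.1 a b).degree w + indN (src G d) w + indN (tgt G d) w =
      G.degree w + indN a w + indN b w := by
  have h : indN (src G d) w + indN (tgt G d) w = indN (G.fst d.1) w + indN (G.snd d.1) w := by
    obtain ⟨e, b⟩ := d; cases b <;> simp [src, tgt, add_comm]
  rw [degree_eq_sum, degree_eq_sum, ← Finset.add_sum_erase _ _ (Finset.mem_univ d.1),
    ← Finset.add_sum_erase (a := d.1) (f := fun x => indN (G.fst x) w + indN (G.snd x) w) _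
      (Finset.mem_univ d.1)]
  have : ∑ x ∈ Finset.univ.erase d.1, (indN ((redirect G d.1 a b).fst x) w +
        indN ((redirect G d.1 a b).snd x) w) =
      ∑ x ∈ Finset.univ.erase d.1, (indN (G.fst x) w + indN (G.snd x) w) :=
    Finset.sum_congr rfl fun x hx => by
      simp [Function.update_of_ne (Finset.ne_of_mem_erase hx)]
  rw [this]
  simp only [Function.update_self]
  omega

/-- The dart leaving a leaf. -/
lemma exists_leaf_dart (G : Multigraph V) {x : V} (h : G.degree x = 1) :
    ∃ d, src G d = x ∧ tgt G d ≠ x ∧ (∀ d', src G d' = x → d' = d) ∧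
      ∀ f : G.E → ℝ, G.netFlow f x = cur f d := by
  rw [degree_eq_darts, Finset.card_eq_one] at h
  obtain ⟨d, hd⟩ := h
  have hmem : ∀ d', src G d' = x ↔ d' = d := fun d' => by
    have := Finset.ext_iff.1 hd d'
    simpa using this
  refine ⟨d, (hmem d).2 rfl, fun h => rev_ne d ?_, fun d' => (hmem d').1, fun f => ?_⟩
  · rw [← hmem, src_rev, h]
  · rw [netFlow_eq_darts, hd, Finset.sum_singleton]

/-- The two darts leaving a vertex of degree two. -/
lemma exists_darts_two (G : Multigraph V) {x : V} (h : G.degree x = 2) :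
    ∃ d d', d ≠ d' ∧ (∀ d'', src G d'' = x ↔ d'' = d ∨ d'' = d') ∧
      ∀ f : G.E → ℝ, G.netFlow f x = cur f d + cur f d' := by
  rw [degree_eq_darts, Finset.card_eq_two] at h
  obtain ⟨d, d', hne, hd⟩ := h
  refine ⟨d, d', hne, fun d'' => ?_, fun f => ?_⟩
  · have := Finset.ext_iff.1 hd d''
    simpa using this
  · rw [netFlow_eq_darts, hd, Finset.sum_pair hne]

/-- As `exists_darts_two`, with one of the two darts prescribed. -/
lemma exists_other_dart (G : Multigraph V) {x : V} (h : G.degree x = 2) (d : G.E × Bool)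
    (hd : src G d = x) :
    ∃ d', d ≠ d' ∧ (∀ d'', src G d'' = x ↔ d'' = d ∨ d'' = d') ∧
      ∀ f : G.E → ℝ, G.netFlow f x = cur f d + cur f d' := by
  obtain ⟨a, b, hne, hmem, hflow⟩ := exists_darts_two G h
  rcases (hmem d).1 hd with rfl | rfl
  · exact ⟨b, hne, hmem, hflow⟩
  · exact ⟨a, hne.symm, fun d'' => by rw [hmem, or_comm], fun f => by rw [hflow, add_comm]⟩

/-- If the root is a leaf, moving the root to its neighbour lowers the resistance of every
other vertex by `1`. -/
lemma reroot {G : Multigraph V} {ρ : V} {n : ℕ} (hcard : Fintype.card V = n + 1)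
    (hn : 1 ≤ n) (hdeg : G.degree ρ = 1) {F : V → G.E → ℝ} (hF : IsFam G ρ F)
    (hR : G.Rtot ρ = ENNReal.ofReal (∑ v, en (F v))) :
    ∃ ρ', G.Rtot ρ' + ENNReal.ofReal ((n : ℝ) - 1) ≤ G.Rtot ρ := by
  obtain ⟨d, hd, hne, -, hflow⟩ := exists_leaf_dart G hdeg
  refine ⟨tgt G d, ?_⟩
  -- delete the current through the pendant edge; the old root is served by that edge alone
  let F' : V → G.E → ℝ := fun v => if v = ρ then Function.update 0 d.1 (-(cur (fun _ => 1) d))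
    else Function.update (F v) d.1 0
  refine Rtot_add_le (F := F) (F' := F') ?_ hR ?_ ?_
  · rw [sub_nonneg]; exact_mod_cast hn
  · intro v w
    have hm := fun f => mul_inc G f d w
    by_cases hv : v = ρ
    · have h1 := hm fun _ => 1
      simp only [F', hv, if_true, netFlow_update]
      have h2 : cur (fun _ : G.E => (1 : ℝ)) d ^ 2 = 1 := by rw [cur_sq]; simp
      rw [netFlow_eq]
      simp only [Pi.zero_apply, zero_mul, Finset.sum_const_zero, one_mul] at h1 ⊢
      rw [h1, hd]
      linear_combination (-(ind ρ w - ind (tgt G d) w)) * h2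
    · simp only [F', hv, if_false, netFlow_update]
      have h1 : cur (F v) d = 1 := by
        rw [← hflow, hF]; simp [ind, hv]
      have h2 := hm (F v)
      rw [h1, hd] at h2
      rw [hF]
      linear_combination -h2
  · rw [← Finset.add_sum_erase _ _ (Finset.mem_univ ρ),
      ← Finset.add_sum_erase (a := ρ) (f := fun v => en (F v)) _ (Finset.mem_univ ρ)]
    have h1 : ∑ v ∈ Finset.univ.erase ρ, en (F' v) =
        ∑ v ∈ Finset.univ.erase ρ, (en (F v) - 1) := by
      refine Finset.sum_congr rfl fun v hv => ?_
      have hv' := Finset.ne_of_mem_erase hv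
      have h1 : cur (F v) d = 1 := by
        rw [← hflow, hF]; simp [ind, hv']
      have h2 := cur_sq (F v) d
      simp only [F', hv', if_false, en_update]
      rw [← h2, h1]; ring
    have h2 : en (F' ρ) = 1 := by
      simp only [F', if_true, en_update]
      rw [neg_sq, cur_sq]; simp [en]
    rw [h1, h2, Finset.sum_sub_distrib, Finset.sum_const, Finset.card_erase_of_mem
      (Finset.mem_univ ρ), Finset.card_univ, hcard]
    have := en_nonneg (F ρ)
    simp
    linarith

/-- Reattaching a leaf `x` to the root replaces the energy of the flow to `x` by `1` and changes
no other flow. -/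
lemma move_leaf {G : Multigraph V} {ρ x : V} (hx : x ≠ ρ) (d : G.E × Bool)
    (hflow : ∀ f : G.E → ℝ, G.netFlow f x = cur f d)
    {F : V → G.E → ℝ} (hF : IsFam G ρ F)
    (hR : G.Rtot ρ = ENNReal.ofReal (∑ v, en (F v))) {g : ℝ} (hg : 0 ≤ g)
    (hen : 1 + g ≤ en (F x)) :
    (redirect G d.1 x ρ).Connected ∧
      (redirect G d.1 x ρ).Rtot ρ + ENNReal.ofReal g ≤ G.Rtot ρ := by
  let F' : V → G.E → ℝ := fun v => if v = x then Function.update 0 d.1 (-1) else F v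
  have h0 : ∀ v, v ≠ x → F v d.1 = 0 := fun v hv => by
    have h1 := hF v x
    have h2 := cur_sq (F v) d
    rw [hflow] at h1
    rw [h1] at h2
    simpa [ind, hv, hx.symm] using h2.symm
  have hF' : IsFam (redirect G d.1 x ρ) ρ F' := by
    intro v w
    by_cases hv : v = x
    · simp only [F', hv, if_true]
      rw [netFlow_redirect, netFlow_update, netFlow_eq]
      simp
      ring
    · simp only [F', hv, if_false]
      rw [netFlow_redirect, h0 v hv, hF]
      simp
  refine ⟨connected_of_fam hF', Rtot_add_le hg hR hF' ?_⟩
  have h1 : en (F' x) = 1 := by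
    simp only [F', if_true, en_update]; simp [en]
  have h2 : ∑ v ∈ Finset.univ.erase x, en (F' v) = ∑ v ∈ Finset.univ.erase x, en (F v) :=
    Finset.sum_congr rfl fun v hv => by simp [F', Finset.ne_of_mem_erase hv]
  rw [← Finset.add_sum_erase _ _ (Finset.mem_univ x),
    ← Finset.add_sum_erase (a := x) (f := fun v => en (F v)) _ (Finset.mem_univ x), h1, h2]
  linarith

/-! ### Contracting the middle of a path of degree-two vertices -/

/-- For two darts `d₁ : x → y₁` and `d₂ : x → y₂`, delete their edges, join `y₁` to `y₂` and
`x` to `ρ`. When `x` has degree two this contracts an edge at `x` and reuses `x` as a leaf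
attached to the root. -/
noncomputable abbrev contract (G : Multigraph V) (d₁ d₂ : G.E × Bool) (ρ : V) : Multigraph V :=
  redirect (redirect G d₁.1 (tgt G d₁) (tgt G d₂)) d₂.1 (src G d₂) ρ

/-- The current assignment on `contract G d₁ d₂ ρ` that agrees with `f` on the surviving edges
and sends `t` from `tgt d₁` to `tgt d₂` and `u` from `src d₂` to `ρ`. -/
noncomputable def reflow {E : Type} (d₁ d₂ : E × Bool) (f : E → ℝ) (t u : ℝ) : E → ℝ :=
  Function.update (Function.update f d₁.1 t) d₂.1 u

lemma netFlow_contract (G : Multigraph V) {d₁ d₂ : G.E × Bool} (ρ : V) (h : d₁.1 ≠ d₂.1)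
    (hs : src G d₁ = src G d₂) (f : G.E → ℝ) (t u : ℝ) (w : V) :
    (contract G d₁ d₂ ρ).netFlow (reflow d₁ d₂ f t u) w = G.netFlow f w
      + t * (ind (tgt G d₁) w - ind (tgt G d₂) w) + u * (ind (src G d₂) w - ind ρ w)
      - cur f d₁ * (ind (src G d₂) w - ind (tgt G d₁) w)
      - cur f d₂ * (ind (src G d₂) w - ind (tgt G d₂) w) := by
  unfold reflow
  rw [netFlow_redirect, netFlow_redirect, netFlow_update, netFlow_update,
    inc_redirect_of_ne G h.symm]
  have h1 := mul_inc G f d₁ w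
  have h2 := mul_inc G f d₂ w
  rw [hs] at h1
  simp only [Function.update_self, Function.update_of_ne h, Function.update_of_ne h.symm]
  linear_combination -h1 - h2

lemma en_reflow {E : Type} [Fintype E] {d₁ d₂ : E × Bool} (h : d₁.1 ≠ d₂.1) (f : E → ℝ)
    (t u : ℝ) :
    en (reflow d₁ d₂ f t u) = en f + t ^ 2 + u ^ 2 - cur f d₁ ^ 2 - cur f d₂ ^ 2 := by
  unfold reflow
  rw [en_update, en_update, Function.update_of_ne h.symm, cur_sq, cur_sq]
  ring

lemma degree_contract (G : Multigraph V) {d₁ d₂ : G.E × Bool} (ρ : V) (h : d₁.1 ≠ d₂.1)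
    (hs : src G d₁ = src G d₂) (w : V) :
    (contract G d₁ d₂ ρ).degree w + indN (src G d₂) w = G.degree w + indN ρ w := by
  have h1 := degree_redirect G d₁ (tgt G d₁) (tgt G d₂) w
  have h2 := degree_redirect (redirect G d₁.1 (tgt G d₁) (tgt G d₂)) d₂ (src G d₂) ρ w
  have h3 : src (redirect G d₁.1 (tgt G d₁) (tgt G d₂)) d₂ = src G d₂ := by
    simp [src, Function.update_of_ne h.symm]
  have h4 : tgt (redirect G d₁.1 (tgt G d₁) (tgt G d₂)) d₂ = tgt G d₂ := by
    simp [tgt, Function.update_of_ne h.symm]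
  rw [h3, h4] at h2
  rw [hs] at h1
  unfold contract
  omega

lemma four_le_en {E : Type} [Fintype E] (f : E → ℝ) {a b c d : E × Bool}
    (hab : a.1 ≠ b.1) (hac : a.1 ≠ c.1) (had : a.1 ≠ d.1) (hbc : b.1 ≠ c.1) (hbd : b.1 ≠ d.1)
    (hcd : c.1 ≠ d.1) : cur f a ^ 2 + cur f b ^ 2 + cur f c ^ 2 + cur f d ^ 2 ≤ en f := by
  have h := Finset.sum_le_sum_of_subset_of_nonneg (f := fun e => f e ^ 2)
    (Finset.subset_univ ({a.1, b.1, c.1, d.1} : Finset E)) (fun _ _ _ => sq_nonneg _)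
  rw [Finset.sum_insert (by simp [hab, hac, had]), Finset.sum_insert (by simp [hbc, hbd]),
    Finset.sum_pair hcd] at h
  simp only [cur_sq]
  unfold en
  linarith

/-- Let `y₀ - x₁ - x₂ - x₃ - y₄` be a path in which `x₁, x₂, x₃` have degree two, traversed by
`rev d₀`, `rev d₁`, `d₂`, `d₃`. Contracting at `x₂` saves at least `1/100` in total. -/
lemma contract_gain {G : Multigraph V} {ρ : V} {d₀ d₁ d₂ d₃ : G.E × Bool}
    (hs : src G d₁ = src G d₂) (hx₁ : tgt G d₁ ≠ ρ) (hx₂ : src G d₂ ≠ ρ) (hx₃ : tgt G d₂ ≠ ρ)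
    (h₁₂ : tgt G d₁ ≠ src G d₂) (h₁₃ : tgt G d₁ ≠ tgt G d₂) (h₃₂ : tgt G d₂ ≠ src G d₂)
    (e₀₁ : d₀.1 ≠ d₁.1) (e₀₂ : d₀.1 ≠ d₂.1) (e₀₃ : d₀.1 ≠ d₃.1) (e₁₂ : d₁.1 ≠ d₂.1)
    (e₁₃ : d₁.1 ≠ d₃.1) (e₂₃ : d₂.1 ≠ d₃.1)
    (k₁ : ∀ f : G.E → ℝ, G.netFlow f (tgt G d₁) = cur f (rev d₁) + cur f d₀)
    (k₂ : ∀ f : G.E → ℝ, G.netFlow f (src G d₂) = cur f d₁ + cur f d₂)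
    (k₃ : ∀ f : G.E → ℝ, G.netFlow f (tgt G d₂) = cur f (rev d₂) + cur f d₃)
    {F : V → G.E → ℝ} (hF : IsFam G ρ F)
    (hR : G.Rtot ρ = ENNReal.ofReal (∑ v, en (F v))) :
    (contract G d₁ d₂ ρ).Connected ∧
      (contract G d₁ d₂ ρ).Rtot ρ + ENNReal.ofReal (1 / 100) ≤ G.Rtot ρ := by
  set x₁ := tgt G d₁ with hx₁d
  set x₂ := src G d₂ with hx₂d
  set x₃ := tgt G d₂ with hx₃d
  have i₂ : ∀ v, v ≠ x₂ → cur (F v) d₁ = - cur (F v) d₂ := fun v hv => by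
    have := hF v x₂
    rw [k₂] at this
    simp only [ind, hx₂.symm, hv, if_false] at this
    linarith
  have i₁ : ∀ v, v ≠ x₁ → cur (F v) d₀ = cur (F v) d₁ := fun v hv => by
    have := hF v x₁
    rw [k₁, cur_rev] at this
    simp only [ind, hx₁.symm, hv, if_false] at this
    linarith
  have i₃ : ∀ v, v ≠ x₃ → cur (F v) d₃ = cur (F v) d₂ := fun v hv => by
    have := hF v x₃
    rw [k₃, cur_rev] at this
    simp only [ind, hx₃.symm, hv, if_false] at this
    linarith
  have j₂ : cur (F x₂) d₁ = -1 - cur (F x₂) d₂ := by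
    have := hF x₂ x₂
    rw [k₂] at this
    simp only [ind, hx₂.symm, if_false, if_true] at this
    linarith
  have j₁ : cur (F x₁) d₀ = cur (F x₁) d₁ - 1 := by
    have := hF x₁ x₁
    rw [k₁, cur_rev] at this
    simp only [ind, hx₁.symm, if_false, if_true] at this
    linarith
  have j₃ : cur (F x₃) d₃ = cur (F x₃) d₂ - 1 := by
    have := hF x₃ x₃
    rw [k₃, cur_rev] at this
    simp only [ind, hx₃.symm, if_false, if_true] at this
    linarith
  have N := netFlow_contract G ρ e₁₂ hs
  -- it suffices to choose the new flows to `x₁` and `x₃` well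
  have key : ∀ g₁ g₃ : G.E → ℝ,
      (∀ w, (contract G d₁ d₂ ρ).netFlow g₁ w = ind ρ w - ind x₁ w) →
      (∀ w, (contract G d₁ d₂ ρ).netFlow g₃ w = ind ρ w - ind x₃ w) →
      en g₁ + en g₃ + 1 + 1 / 100 ≤ en (F x₁) + en (F x₂) + en (F x₃) →
      (contract G d₁ d₂ ρ).Connected ∧
        (contract G d₁ d₂ ρ).Rtot ρ + ENNReal.ofReal (1 / 100) ≤ G.Rtot ρ := by
    intro g₁ g₃ hg₁ hg₃ hen
    let F' : V → G.E → ℝ := fun v => if v = x₁ then g₁ else if v = x₃ then g₃ else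
      if v = x₂ then reflow d₁ d₂ 0 0 (-1) else reflow d₁ d₂ (F v) (cur (F v) d₂) 0
    have hF' : IsFam (contract G d₁ d₂ ρ) ρ F' := by
      intro v w
      by_cases a₁ : v = x₁
      · simp only [F', a₁, if_true]; exact hg₁ w
      by_cases a₃ : v = x₃
      · simp only [F', a₃, h₁₃.symm, if_true, if_false]; exact hg₃ w
      by_cases a₂ : v = x₂
      · simp only [F', a₂, h₁₂.symm, h₃₂.symm, if_true, if_false]
        rw [N, netFlow_eq]
        simp [cur, hx₂d]
      · simp only [F', a₁, a₂, a₃, if_false]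
        rw [N, hF, i₂ v a₂]
        ring
    refine ⟨connected_of_fam hF', Rtot_add_le (by norm_num) hR hF' ?_⟩
    have hsub := Finset.sum_le_sum_of_subset_of_nonneg (f := fun v => en (F v) - en (F' v))
      (Finset.subset_univ ({x₁, x₃, x₂} : Finset V)) ?_
    · rw [Finset.sum_insert (by simp [h₁₂, h₁₃]), Finset.sum_pair h₃₂,
        Finset.sum_sub_distrib] at hsub
      have b₁ : F' x₁ = g₁ := by simp [F']
      have b₃ : F' x₃ = g₃ := by simp [F', h₁₃.symm]
      have b₂ : en (F' x₂) = 1 := by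
        have : F' x₂ = reflow d₁ d₂ 0 0 (-1) := by simp [F', h₁₂.symm, h₃₂.symm]
        rw [this, en_reflow e₁₂]
        simp [en, cur]
      rw [b₁, b₂, b₃] at hsub
      linarith
    · intro v _ hv
      simp only [Finset.mem_insert, Finset.mem_singleton, not_or] at hv
      have : F' v = reflow d₁ d₂ (F v) (cur (F v) d₂) 0 := by simp [F', hv]
      rw [this, en_reflow e₁₂]
      nlinarith [sq_nonneg (cur (F v) d₁)]
  have E₁ := four_le_en (F x₁) e₀₁ e₀₂ e₀₃ e₁₂ e₁₃ e₂₃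
  have E₂ := four_le_en (F x₂) e₀₁ e₀₂ e₀₃ e₁₂ e₁₃ e₂₃
  have E₃ := four_le_en (F x₃) e₀₁ e₀₂ e₀₃ e₁₂ e₁₃ e₂₃
  rw [i₃ x₁ h₁₃, i₂ x₁ h₁₂, j₁, i₂ x₁ h₁₂] at E₁
  rw [i₁ x₂ h₁₂.symm, i₃ x₂ h₃₂.symm, j₂] at E₂
  rw [j₃, i₁ x₃ h₁₃.symm, i₂ x₃ h₃₂] at E₃
  -- the flows to `x₁` and `x₃` inherited from `G`
  have f₁ : ∀ w, (contract G d₁ d₂ ρ).netFlow (reflow d₁ d₂ (F x₁) (cur (F x₁) d₂) 0) w =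
      ind ρ w - ind x₁ w := fun w => by
    rw [N, hF, i₂ x₁ h₁₂]; ring
  have f₃ : ∀ w, (contract G d₁ d₂ ρ).netFlow (reflow d₁ d₂ (F x₃) (cur (F x₃) d₂) 0) w =
      ind ρ w - ind x₃ w := fun w => by
    rw [N, hF, i₂ x₃ h₃₂]; ring
  have s₁ := en_reflow e₁₂ (F x₁) (cur (F x₁) d₂) 0
  have s₃ := en_reflow e₁₂ (F x₃) (cur (F x₃) d₂) 0
  rw [i₂ x₁ h₁₂] at s₁
  rw [i₂ x₃ h₃₂] at s₃
  by_cases hA : 1 / 100 ≤ en (F x₂) - 1 + cur (F x₁) d₂ ^ 2 + cur (F x₃) d₂ ^ 2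
  · refine key _ _ f₁ f₃ ?_
    rw [s₁, s₃]; linarith
  -- otherwise almost all the current to `x₁` avoids `x₂`, so `x₁` has resistance well above
  -- `3/4`; then the flow to `x₂`, contracted, is a better flow to one of `x₁`, `x₃`
  push Not at hA
  generalize hb : cur (F x₂) d₂ = b at *
  generalize cur (F x₁) d₂ = p at *
  generalize cur (F x₃) d₂ = q at *
  have hp : p ^ 2 < 1 / 100 := by nlinarith [sq_nonneg (2 * b + 1), sq_nonneg q]
  have hq : q ^ 2 < 1 / 100 := by nlinarith [sq_nonneg (2 * b + 1), sq_nonneg p]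
  have hp' := abs_lt_of_sq_lt_sq (a := p) (b := 1 / 10) (by linarith) (by norm_num)
  have hq' := abs_lt_of_sq_lt_sq (a := q) (b := 1 / 10) (by linarith) (by norm_num)
  rw [abs_lt] at hp' hq'
  rcases le_total b (-1 / 2) with hb2 | hb2
  · have f₄ : ∀ w, (contract G d₁ d₂ ρ).netFlow (reflow d₁ d₂ (F x₂) (-cur (F x₂) d₁) 0) w =
        ind ρ w - ind x₃ w := fun w => by
      rw [N, hF, j₂, hb]; ring
    refine key _ _ f₁ f₄ ?_
    rw [s₁, en_reflow e₁₂, j₂, hb]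
    nlinarith
  · have f₄ : ∀ w, (contract G d₁ d₂ ρ).netFlow (reflow d₁ d₂ (F x₂) (cur (F x₂) d₂) 0) w =
        ind ρ w - ind x₁ w := fun w => by
      rw [N, hF, j₂, hb]; ring
    refine key _ _ f₄ f₃ ?_
    rw [s₃, en_reflow e₁₂, j₂, hb]
    nlinarith

/-! ### Finding three consecutive vertices of degree two -/

/-- If no vertex of degree two has two neighbours of degree at most two, then each non-root vertex
of degree at most two has a dart into the rest of the graph. Counting darts, this forces at
least `9n - 8m` leaves. -/
lemma exists_middle {G : Multigraph V} (hconn : G.Connected) {ρ : V} {n m : ℕ}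
    (hcard : Fintype.card V = n + 1) (hm : G.edgeCount = m)
    (hk : G.leafCount < 9 * n - 8 * m) (hρ : G.degree ρ ≠ 1)
    (hleaf : ∀ d, src G d ≠ ρ → G.degree (src G d) = 1 → tgt G d = ρ) :
    ∃ d₁ d₂, d₁ ≠ d₂ ∧ src G d₁ = src G d₂ ∧ src G d₂ ≠ ρ ∧ G.degree (src G d₂) = 2 ∧
      tgt G d₁ ≠ ρ ∧ tgt G d₂ ≠ ρ ∧ G.degree (tgt G d₁) ≤ 2 ∧ G.degree (tgt G d₂) ≤ 2 := by
  by_contra hno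
  push Not at hno
  let A : Finset V := Finset.univ.filter fun v => v ≠ ρ ∧ G.degree v ≤ 2
  let L : Finset V := Finset.univ.filter fun v => G.degree v = 1
  have hpos : ∀ v, v ≠ ρ → 0 < G.degree v := fun v hv => degree_ne_zero hconn hv
  have hout : ∀ v ∈ A, ∃ d, src G d = v ∧ tgt G d ∉ A := by
    intro v hv
    simp only [A, Finset.mem_filter, Finset.mem_univ, true_and] at hv ⊢
    have := hpos v hv.1
    obtain h1 | h2 : G.degree v = 1 ∨ G.degree v = 2 := by omega
    · obtain ⟨d, hd, -⟩ := exists_leaf_dart G h1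
      refine ⟨d, hd, fun h => h.1 (hleaf d (hd ▸ hv.1) (hd ▸ h1))⟩
    · obtain ⟨d, d', hne, hmem, -⟩ := exists_darts_two G h2
      have e1 := (hmem d).2 (Or.inl rfl)
      have e2 := (hmem d').2 (Or.inr rfl)
      by_contra hcon
      push Not at hcon
      have h3 := hcon d e1
      have h4 := hcon d' e2
      have := hno d d' hne (e1.trans e2.symm) (e2 ▸ hv.1) (e2 ▸ h2) h3.1 h4.1 h3.2
      omega
  have hAT : A.card ≤ ∑ v ∈ Aᶜ, G.degree v := by
    have h1 : ∑ v ∈ Aᶜ, G.degree v = (Finset.univ.filter fun d => src G d ∈ Aᶜ).card := by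
      rw [Finset.card_eq_sum_card_fiberwise (f := src G) (t := Aᶜ)
        (fun d hd => by simpa using hd)]
      refine Finset.sum_congr rfl fun v hv => ?_
      rw [degree_eq_darts, Finset.filter_filter]
      congr 1
      ext d
      simp only [Finset.mem_filter, Finset.mem_univ, true_and]
      exact ⟨fun h => ⟨h ▸ hv, h⟩, fun h => h.2⟩
    rw [h1]
    refine (Finset.card_le_card ?_).trans
      (Finset.card_image_le (s := Finset.univ.filter fun d => src G d ∈ Aᶜ) (f := tgt G))
    intro v hv
    obtain ⟨d, hd, hd'⟩ := hout v hv
    rw [Finset.mem_image]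
    exact ⟨rev d, by simpa using hd', by simpa using hd⟩
  have hLρ : L.card ≤ G.degree ρ := by
    rw [degree_eq_darts]
    refine (Finset.card_le_card ?_).trans
      (Finset.card_image_le (s := Finset.univ.filter fun d => src G d = ρ) (f := tgt G))
    intro v hv
    simp only [L, Finset.mem_filter, Finset.mem_univ, true_and] at hv
    obtain ⟨d, hd, -⟩ := exists_leaf_dart G hv
    have hvρ : v ≠ ρ := fun h => hρ (h ▸ hv)
    rw [Finset.mem_image]
    refine ⟨rev d, ?_, by simpa using hd⟩
    simpa using hleaf d (hd ▸ hvρ) (hd ▸ hv)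
  have hρA : ρ ∈ Aᶜ := by simp [A]
  have hT : G.degree ρ + 3 * (Aᶜ.card - 1) ≤ ∑ v ∈ Aᶜ, G.degree v := by
    rw [← Finset.add_sum_erase _ _ hρA, ← Finset.card_erase_of_mem hρA, mul_comm]
    refine Nat.add_le_add_left ?_ _
    rw [← smul_eq_mul]
    refine Finset.card_nsmul_le_sum _ _ _ fun v hv => ?_
    have h1 := Finset.ne_of_mem_erase hv
    have h2 := Finset.mem_of_mem_erase hv
    simp only [A, Finset.mem_compl, Finset.mem_filter, Finset.mem_univ, true_and] at h2
    by_contra h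
    exact h2 ⟨h1, by omega⟩
  have hA : ∑ v ∈ A, G.degree v + L.card = 2 * A.card := by
    have hL : L.card = ∑ v ∈ A, if G.degree v = 1 then 1 else 0 := by
      rw [← Finset.card_filter]
      congr 1
      ext v
      simp only [L, A, Finset.mem_filter, Finset.mem_univ, true_and]
      exact ⟨fun h => ⟨⟨fun h' => hρ (h' ▸ h), by omega⟩, h⟩, fun h => h.2⟩
    rw [hL, ← Finset.sum_add_distrib, mul_comm, ← smul_eq_mul, ← Finset.sum_const]
    refine Finset.sum_congr rfl fun v hv => ?_
    simp only [A, Finset.mem_filter, Finset.mem_univ, true_and] at hv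
    have := hpos v hv.1
    split_ifs <;> omega
  have htot := Finset.sum_add_sum_compl A G.degree
  rw [sum_degree, hm] at htot
  have hc := Finset.card_add_card_compl A
  rw [hcard] at hc
  have hcpos : 0 < Aᶜ.card := Finset.card_pos.2 ⟨ρ, hρA⟩
  have hLk : L.card = G.leafCount := rfl
  omega

/-! ### The iteration -/

lemma degree_le (G : Multigraph V) (v : V) : G.degree v ≤ 2 * G.edgeCount := by
  rw [← sum_degree]
  exact Finset.single_le_sum_of_canonicallyOrdered (Finset.mem_univ v)

/-- A leaf not attached to the root can be reattached to it. This creates at most one leaf, namely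
the old neighbour if it had degree two; in that case the flow to the moved leaf used two edges in
series, so a full unit of resistance is saved. -/
lemma step_leaf {G : Multigraph V} (hconn : G.Connected) {ρ : V}
    {F : V → G.E → ℝ} (hF : IsFam G ρ F) (hR : G.Rtot ρ = ENNReal.ofReal (∑ v, en (F v)))
    {d : G.E × Bool} (hd : src G d ≠ ρ) (h1 : G.degree (src G d) = 1) (ht : tgt G d ≠ ρ) :
    ∃ (G' : Multigraph V) (j : ℕ), G'.Connected ∧ G'.edgeCount = G.edgeCount ∧
      G.degree ρ < G'.degree ρ ∧ G'.leafCount ≤ G.leafCount + j ∧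
      G'.Rtot ρ + ENNReal.ofReal ((j : ℝ) / 100) ≤ G.Rtot ρ := by
  obtain ⟨d', hd', hne, huniq, hflow⟩ := exists_leaf_dart G h1
  obtain rfl := huniq d rfl
  have hdeg := degree_redirect G d (src G d) ρ
  have hρ0 : 0 < G.degree ρ := degree_ne_zero hconn hd.symm
  have hdρ : G.degree ρ < (redirect G d.1 (src G d) ρ).degree ρ := by
    have := hdeg ρ
    simp only [indN, ht, hd, if_false, if_true] at this
    omega
  have hcur : cur (F (src G d)) d ^ 2 = 1 := by
    rw [← hflow, hF]; simp [ind, hd.symm]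
  by_cases h2 : G.degree (tgt G d) = 2
  · obtain ⟨d₂, hne₂, hmem, hflow₂⟩ := exists_other_dart G h2 (rev d) (by simp)
    have hcur₂ : cur (F (src G d)) d₂ = cur (F (src G d)) d := by
      have := hF (src G d) (tgt G d)
      rw [hflow₂, cur_rev] at this
      simp only [ind, ht.symm, hne.symm, if_false] at this
      linarith
    have he : d.1 ≠ d₂.1 := fun h => by
      rcases eq_or_eq_rev h.symm with h' | h'
      · have := (hmem d₂).2 (Or.inr rfl)
        rw [h'] at this
        exact hne this.symm
      · exact hne₂ h'.symm
    have hen := Finset.sum_le_sum_of_subset_of_nonneg (f := fun e => F (src G d) e ^ 2)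
      (Finset.subset_univ ({d.1, d₂.1} : Finset G.E)) (fun _ _ _ => sq_nonneg _)
    rw [Finset.sum_pair he, ← cur_sq, ← cur_sq, hcur₂, hcur] at hen
    obtain ⟨hc, hr⟩ := move_leaf hd d hflow hF hR (g := ((1 : ℕ) : ℝ) / 100) (by norm_num)
      (by unfold en; norm_num; linarith)
    refine ⟨_, 1, hc, rfl, hdρ, ?_, hr⟩
    refine (Finset.card_le_card fun z hz => ?_).trans (Finset.card_insert_le (tgt G d) _)
    simp only [Finset.mem_insert, Finset.mem_filter, Finset.mem_univ, true_and] at hz ⊢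
    by_cases hzt : tgt G d = z
    · exact Or.inl hzt.symm
    · have := hdeg z
      by_cases hzρ : ρ = z
      · subst hzρ; omega
      · simp only [indN, hzρ, hzt, if_false] at this
        omega
  · have hen : cur (F (src G d)) d ^ 2 ≤ en (F (src G d)) := by
      rw [cur_sq]
      exact Finset.single_le_sum (f := fun e => F (src G d) e ^ 2) (fun _ _ => sq_nonneg _)
        (Finset.mem_univ d.1)
    obtain ⟨hc, hr⟩ := move_leaf hd d hflow hF hR (g := ((0 : ℕ) : ℝ) / 100) (by norm_num)
      (by norm_num; linarith)
    refine ⟨_, 0, hc, rfl, hdρ, ?_, hr⟩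
    refine Finset.card_le_card fun z hz => ?_
    simp only [Finset.mem_filter, Finset.mem_univ, true_and] at hz ⊢
    have := hdeg z
    by_cases hzρ : ρ = z
    · subst hzρ; omega
    by_cases hzt : tgt G d = z
    · subst hzt
      simp only [indN, hzρ, if_false, if_true] at this
      omega
    · simp only [indN, hzρ, hzt, if_false] at this
      omega

/-- If all leaves hang at the root and there are fewer than `9n - 8m` of them, a contraction
creates a new leaf and lowers the total resistance by at least `1/100`. -/
lemma step_contract {G : Multigraph V} (hconn : G.Connected) {ρ : V} {n m : ℕ}
    (hcard : Fintype.card V = n + 1) (hm : G.edgeCount = m)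
    (hk : G.leafCount < 9 * n - 8 * m) (hρ : G.degree ρ ≠ 1)
    (hleaf : ∀ d, src G d ≠ ρ → G.degree (src G d) = 1 → tgt G d = ρ)
    {F : V → G.E → ℝ} (hF : IsFam G ρ F) (hR : G.Rtot ρ = ENNReal.ofReal (∑ v, en (F v))) :
    ∃ G' : Multigraph V, G'.Connected ∧ G'.edgeCount = G.edgeCount ∧
      G.degree ρ < G'.degree ρ ∧ G'.leafCount ≤ G.leafCount + 1 ∧
      G'.Rtot ρ + ENNReal.ofReal (1 / 100) ≤ G.Rtot ρ := by
  obtain ⟨d₁, d₂, hne, hs, hx₂, hdeg₂, hx₁, hx₃, hdeg₁, hdeg₃⟩ :=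
    exists_middle hconn hcard hm hk hρ hleaf
  -- a neighbour of the middle vertex is not a leaf, since leaves are attached to the root
  have htwo : ∀ d, src G d = src G d₂ → tgt G d ≠ ρ → G.degree (tgt G d) ≤ 2 →
      G.degree (tgt G d) = 2 := by
    intro d hd h1 h2
    have h3 := degree_pos G (rev d)
    rw [src_rev] at h3
    by_contra h4
    have := hleaf (rev d) (by rwa [src_rev]) (by rw [src_rev]; omega)
    rw [tgt_rev, hd] at this
    exact hx₂ this
  replace hdeg₁ := htwo d₁ hs hx₁ hdeg₁
  replace hdeg₃ := htwo d₂ rfl hx₃ hdeg₃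
  obtain ⟨d₂', hne', hmem₂, k₂⟩ := exists_other_dart G hdeg₂ d₁ hs
  obtain rfl : d₂ = d₂' := ((hmem₂ d₂).1 rfl).resolve_left hne.symm
  have hclosed : ∀ S : Set V, src G d₂ ∈ S → ρ ∉ S →
      ¬ ∀ d, src G d ∈ S → tgt G d ∈ S := fun S h1 h2 h3 =>
    h2 (mem_of_closed hconn h1 h3 ρ)
  have hrev : d₂ ≠ rev d₁ := by
    rintro rfl
    refine hclosed {src G d₁} (by simpa using hs.symm) (by simpa [hs] using hx₂.symm) ?_
    intro d hd
    have hd2 : src G d = src G (rev d₁) := hd.trans hs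
    rcases (hmem₂ d).1 hd2 with rfl | rfl
    · simp at hs; simp [hs]
    · simp
  have h₁₂ : tgt G d₁ ≠ src G d₂ := by
    intro h
    rcases (hmem₂ (rev d₁)).1 (by simpa using h) with h' | h'
    · exact rev_ne _ h'
    · exact hrev h'.symm
  have h₃₂ : tgt G d₂ ≠ src G d₂ := by
    intro h
    rcases (hmem₂ (rev d₂)).1 (by simpa using h) with h' | h'
    · exact hrev (by rw [← h', rev_rev])
    · exact rev_ne _ h'
  have e₁₂ : d₁.1 ≠ d₂.1 := fun h => by
    rcases eq_or_eq_rev h with h' | h'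
    · exact hne h'
    · exact hrev (by rw [h', rev_rev])
  obtain ⟨d₀, hne₀, hmem₁, k₁⟩ := exists_other_dart G hdeg₁ (rev d₁) (by simp)
  obtain ⟨d₃, hne₃, hmem₃, k₃⟩ := exists_other_dart G hdeg₃ (rev d₂) (by simp)
  have hs₀ := (hmem₁ d₀).2 (Or.inr rfl)
  have hs₃ := (hmem₃ d₃).2 (Or.inr rfl)
  have h₁₃ : tgt G d₁ ≠ tgt G d₂ := by
    intro h
    have h0 : d₀ = rev d₂ := by
      rcases (hmem₁ (rev d₂)).1 (by simp [h]) with h' | h'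
      · exact absurd (congrArg Prod.fst h').symm (by simpa using e₁₂)
      · exact h'.symm
    refine hclosed {src G d₂, tgt G d₂} (by simp) ?_ ?_
    · rintro (h' | h')
      · exact hx₂ h'.symm
      · exact hx₃ h'.symm
    · rintro d (hd | hd)
      · rcases (hmem₂ d).1 hd with rfl | rfl <;> simp [h]
      · rcases (hmem₁ d).1 (by rw [h]; exact hd) with rfl | rfl
        · simp [hs]
        · simp [h0]
  have e₀₁ : d₀.1 ≠ d₁.1 := fun h => by
    rcases eq_or_eq_rev h with h' | h'
    · rw [h', hs] at hs₀; exact h₁₂ hs₀.symm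
    · exact hne₀ h'.symm
  have e₀₂ : d₀.1 ≠ d₂.1 := fun h => by
    rcases eq_or_eq_rev h with h' | h'
    · rw [h'] at hs₀; exact h₁₂ hs₀.symm
    · rw [h', src_rev] at hs₀; exact h₁₃ hs₀.symm
  have e₁₃ : d₁.1 ≠ d₃.1 := fun h => by
    rcases eq_or_eq_rev h.symm with h' | h'
    · rw [h', hs] at hs₃; exact h₃₂ hs₃.symm
    · rw [h', src_rev] at hs₃; exact h₁₃ hs₃
  have e₂₃ : d₂.1 ≠ d₃.1 := fun h => by
    rcases eq_or_eq_rev h.symm with h' | h'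
    · rw [h'] at hs₃; exact h₃₂ hs₃.symm
    · exact hne₃ h'.symm
  -- if the two outer darts lie on one edge, the three vertices form a component
  have e₀₃ : d₀.1 ≠ d₃.1 := fun h => by
    rcases eq_or_eq_rev h with h' | h'
    · rw [h', hs₃] at hs₀; exact h₁₃ hs₀.symm
    · have t₀ : tgt G d₀ = tgt G d₂ := by rw [h', tgt_rev, hs₃]
      have t₃ : tgt G d₃ = tgt G d₁ := by rw [← hs₀, h', src_rev]
      refine hclosed {src G d₂, tgt G d₁, tgt G d₂} (by simp) ?_ ?_
      · rintro (h' | h' | h')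
        · exact hx₂ h'.symm
        · exact hx₁ h'.symm
        · exact hx₃ h'.symm
      · rintro d (hd | hd | hd)
        · rcases (hmem₂ d).1 hd with rfl | rfl <;> simp
        · rcases (hmem₁ d).1 hd with rfl | rfl
          · simp [hs]
          · simp [t₀]
        · rcases (hmem₃ d).1 hd with rfl | rfl
          · simp
          · simp [t₃]
  obtain ⟨hc, hr⟩ := contract_gain hs hx₁ hx₂ hx₃ h₁₂ h₁₃ h₃₂ e₀₁ e₀₂ e₀₃ e₁₂ e₁₃ e₂₃
    k₁ k₂ k₃ hF hR
  have hdeg := degree_contract G ρ e₁₂ hs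
  refine ⟨_, hc, rfl, ?_, ?_, hr⟩
  · have := hdeg ρ
    simp only [indN, hx₂, if_false, if_true] at this
    omega
  · refine (Finset.card_le_card fun z hz => ?_).trans (Finset.card_insert_le (src G d₂) _)
    simp only [Finset.mem_insert, Finset.mem_filter, Finset.mem_univ, true_and] at hz ⊢
    have hρ0 : 0 < G.degree ρ := degree_ne_zero hconn hx₂.symm
    have := hdeg z
    by_cases hz₂ : src G d₂ = z
    · exact Or.inl hz₂.symm
    by_cases hzρ : ρ = z
    · subst hzρ
      simp only [indN, hz₂, if_false, if_true] at this
      omega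
    · simp only [indN, hzρ, hz₂, if_false] at this
      omega

/-- Each step strictly raises the degree of the root, which is at most twice the number of edges,
and pays at least `1/100` for each leaf it creates. -/
lemma main {n m : ℕ} (hcard : Fintype.card V = n + 1) (hnm : n < m) (h9 : 8 * m < 9 * n)
    (N : ℕ) : ∀ (G : Multigraph V) (ρ : V), G.Connected → G.edgeCount = m →
      2 * m + 1 ≤ G.degree ρ + N →
      ∃ (G' : Multigraph V) (ρ' : V), G'.Connected ∧ G'.edgeCount = m ∧
        G'.Rtot ρ' + ENNReal.ofReal (((9 * n - 8 * m - G.leafCount : ℕ) : ℝ) / 100)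
          ≤ G.Rtot ρ := by
  induction N with
  | zero =>
    intro G ρ _ hm hN
    have := degree_le G ρ
    omega
  | succ N ih =>
    intro G ρ hconn hm hN
    by_cases hk : 9 * n - 8 * m ≤ G.leafCount
    · refine ⟨G, ρ, hconn, hm, ?_⟩
      simp [Nat.sub_eq_zero_of_le hk]
    push Not at hk
    by_cases htop : G.Rtot ρ = ⊤
    · exact ⟨G, ρ, hconn, hm, htop ▸ le_top⟩
    obtain ⟨F, hF, hR⟩ := exists_fam G ρ htop
    by_cases hρ : G.degree ρ = 1
    · obtain ⟨ρ', h⟩ := reroot hcard (by omega) hρ hF hR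
      refine ⟨G, ρ', hconn, hm, (add_le_add le_rfl (ENNReal.ofReal_le_ofReal ?_)).trans h⟩
      have h1 : 9 * n - 8 * m - G.leafCount + 1 ≤ n := by omega
      have h2 : ((9 * n - 8 * m - G.leafCount : ℕ) : ℝ) + 1 ≤ n := by exact_mod_cast h1
      have h3 : (0 : ℝ) ≤ ((9 * n - 8 * m - G.leafCount : ℕ) : ℝ) := Nat.cast_nonneg _
      linarith
    obtain ⟨G₁, j, hc₁, hm₁, hd₁, hl₁, hr₁⟩ : ∃ (G₁ : Multigraph V) (j : ℕ), G₁.Connected ∧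
        G₁.edgeCount = G.edgeCount ∧ G.degree ρ < G₁.degree ρ ∧
        G₁.leafCount ≤ G.leafCount + j ∧
        G₁.Rtot ρ + ENNReal.ofReal ((j : ℝ) / 100) ≤ G.Rtot ρ := by
      by_cases hleaf : ∀ d, src G d ≠ ρ → G.degree (src G d) = 1 → tgt G d = ρ
      · obtain ⟨G₁, h⟩ := step_contract hconn hcard hm hk hρ hleaf hF hR
        exact ⟨G₁, 1, by simpa using h⟩
      · push Not at hleaf
        obtain ⟨d, hd, h1, ht⟩ := hleaf
        exact step_leaf hconn hF hR hd h1 ht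
    obtain ⟨G', ρ', hc, hm', hr⟩ := ih G₁ ρ hc₁ (hm₁.trans hm) (by omega)
    refine ⟨G', ρ', hc, hm', ?_⟩
    refine le_trans ?_ ((add_le_add hr le_rfl).trans hr₁)
    rw [add_assoc, ← ENNReal.ofReal_add (by positivity) (by positivity)]
    refine add_le_add le_rfl (ENNReal.ofReal_le_ofReal ?_)
    have h1 : 9 * n - 8 * m - G.leafCount ≤ 9 * n - 8 * m - G₁.leafCount + j := by omega
    have h2 : ((9 * n - 8 * m - G.leafCount : ℕ) : ℝ) ≤
        ((9 * n - 8 * m - G₁.leafCount : ℕ) : ℝ) + j := by exact_mod_cast h1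
    linarith

end LeafCreation

/-- **Lemma (iterated leaf creation).** Fix `n < m` with `2m < 9n/4` and let
`ℓ = 9n - 8m`.  If `G` is a connected rooted graph with `n` non-root vertices, `m`
edges and exactly `k ≤ ℓ` leaves, then there is a connected rooted graph `G'` with `n`
non-root vertices and `m` edges with `Rtot(G') ≤ Rtot(G) - (ℓ - k)/100`. -/
theorem stmt16 (n m : ℕ) (hnm : n < m) (h9 : 8 * m < 9 * n) (k : ℕ)
    (hk : k ≤ 9 * n - 8 * m)
    (G : Multigraph (Fin (n + 1))) (ρ : Fin (n + 1)) (hconn : G.Connected)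
    (hm : G.edgeCount = m) (hleaves : G.leafCount = k) :
    ∃ (G' : Multigraph (Fin (n + 1))) (ρ' : Fin (n + 1)), G'.Connected ∧
      G'.edgeCount = m ∧
      Rtot G' ρ' + ENNReal.ofReal (((9 * n - 8 * m - k : ℕ) : ℝ) / 100) ≤ Rtot G ρ := by
  subst hleaves
  exact LeafCreation.main (by simp) hnm h9 (2 * m + 1) G ρ hconn hm (by omega)
end
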